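/- arXiv:1909.02089 — 2 statements merged into one kernel-verified Lean document; each statement's English description precedes it below -/
import Mathlib

section
/- Fix constants C, c > 0 and η > 0. There exists n₀ such that the following holds for all n ≥ n₀. Let G be an n-vertex C-Ramsey graph, let k be an integer with cn ≤ k ≤ (1−c)n, and let X be the number of edges induced by a uniformly random subset of k vertices of G. Then for every x ∈ ℤ we have Pr(X = x) ≤ n^{η−1}. -/
/-- An `n`-vertex graph is `C`-Ramsey if it has no clique and no independent set of size
`C·log₂ n`. -/
def IsCRamsey (C : ℝ) {n : ℕ} (G : SimpleGraph (Fin n)) : Prop :=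
  ∀ s : Finset (Fin n), C * Real.logb 2 n ≤ s.card →
    ¬ G.IsClique (s : Set (Fin n)) ∧ ¬ Gᶜ.IsClique (s : Set (Fin n))

/-- The number of edges of `G` with both endpoints in `s`. -/
noncomputable def inducedEdgeCount {n : ℕ} (G : SimpleGraph (Fin n)) (s : Finset (Fin n)) : ℕ :=
  Nat.card {e : Sym2 (Fin n) | e ∈ G.edgeSet ∧ ∀ v ∈ e, v ∈ s}

/-!
Compare the uniform `k`-subset with a random subset containing each vertex independently with
probability `p = k / n`: conditioning the latter on its size `k` costs only a factor `n + 1`, so by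
Fourier inversion `Pr(X = x)` is at most the proportion of frequencies `θ = t / n` at which the
characteristic function of the number of edges induced by the independent subset may be large, plus
a negligible error.

To bound this characteristic function, split the vertices into two parts `A` and `B`. By
Cauchy-Schwarz its squared absolute value is at most the average, over two independent random
subsets `b` and `b'` of `B`, of `∏ x ∈ A, |p * e(θ * z x) + 1 - p|`, where `z x` is the difference
between the numbers of neighbours of `x` in `b` and in `b'`. The product is tiny unless `θ * z x` is
close to an integer for almost all `x ∈ A`.

The Ramsey property enters to show that the vector of the numbers `z x` is anticoncentrated. Either
some large `A` contains many disjoint `L`-tuples among whose adjacency patterns to `B` there are `L`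
linearly independent popular ones, or every pair of large disjoint vertex sets contains a pair of
large subsets between which there are very few edges or very few non-edges. Iterating the latter
doubles the product of the sizes of a clique and an independent set at each step, until it exceeds
`(C * log₂ n) ^ 2`. Along each tuple of the former the vector of the numbers `z x` is spread out
over `ℤ ^ L`, so it can stay in the set of `z` with `θ * z` close to an integer only if this set
contains at least a fraction `n ^ (-O(δ))` of all `|z| ≤ n ^ (1 / 2 + δ)`. Such a `θ` is close to a
rational with denominator `n ^ O(δ)`, which leaves only `n ^ O(δ)` possible `t`.
-/

open Finset
open scoped FourierTransform Function

section BernoulliMean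

/-- The expectation of `f U`, where `U` is the random subset of `S` which contains each element of
`S` independently with probability `p`. -/
noncomputable def bernoulliMean {V E : Type*} [AddCommGroup E] [Module ℝ E] (p : ℝ) (S : Finset V)
    (f : Finset V → E) : E :=
  ∑ U ∈ S.powerset, (p ^ #U * (1 - p) ^ (#S - #U)) • f U

variable {V : Type*} {p : ℝ} {S T : Finset V}

section Module

variable {E : Type*} [AddCommGroup E] [Module ℝ E]

lemma bernoulliMean_congr {f g : Finset V → E} (h : ∀ U ⊆ S, f U = g U) :
    bernoulliMean p S f = bernoulliMean p S g :=
  sum_congr rfl fun U hU ↦ by rw [h U (mem_powerset.mp hU)]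

lemma bernoulliMean_empty (p : ℝ) (f : Finset V → E) : bernoulliMean p ∅ f = f ∅ := by
  simp [bernoulliMean]

lemma bernoulliMean_insert [DecidableEq V] (p : ℝ) {a : V} (ha : a ∉ S) (f : Finset V → E) :
    bernoulliMean p (insert a S) f =
      p • bernoulliMean p S (fun U ↦ f (insert a U)) + (1 - p) • bernoulliMean p S f := by
  simp only [bernoulliMean]
  rw [sum_powerset_insert ha, add_comm, smul_sum, smul_sum]
  congr 1 <;> refine sum_congr rfl fun U hU ↦ ?_
  · have haU : a ∉ U := fun h ↦ ha (mem_powerset.mp hU h)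
    rw [card_insert_of_notMem haU, card_insert_of_notMem ha, Nat.add_sub_add_right, smul_smul,
      pow_succ']
    congr 1
    ring
  · have hUS : #U ≤ #S := card_le_card (mem_powerset.mp hU)
    rw [card_insert_of_notMem ha, Nat.succ_sub hUS, smul_smul, pow_succ']
    congr 1
    ring

lemma bernoulliMean_add (p : ℝ) (S : Finset V) (f g : Finset V → E) :
    bernoulliMean p S (fun U ↦ f U + g U) = bernoulliMean p S f + bernoulliMean p S g := by
  simp [bernoulliMean, smul_add, sum_add_distrib]

lemma bernoulliMean_sum {ι : Type*} (p : ℝ) (S : Finset V) (J : Finset ι)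
    (f : ι → Finset V → E) :
    bernoulliMean p S (fun U ↦ ∑ j ∈ J, f j U) = ∑ j ∈ J, bernoulliMean p S (f j) := by
  simp only [bernoulliMean, smul_sum]
  exact sum_comm

lemma map_bernoulliMean {F : Type*} [AddCommGroup F] [Module ℝ F] (φ : E →ₗ[ℝ] F) (p : ℝ)
    (S : Finset V) (f : Finset V → E) :
    φ (bernoulliMean p S f) = bernoulliMean p S (fun U ↦ φ (f U)) := by
  simp [bernoulliMean]

lemma bernoulliMean_comm (p : ℝ) (S T : Finset V) (f : Finset V → Finset V → E) :
    bernoulliMean p S (fun U ↦ bernoulliMean p T (f U)) =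
      bernoulliMean p T (fun W ↦ bernoulliMean p S (f · W)) := by
  simp only [bernoulliMean, smul_sum]
  rw [sum_comm]
  exact sum_congr rfl fun _ _ ↦ sum_congr rfl fun _ _ ↦ smul_comm ..

lemma bernoulliMean_union [DecidableEq V] (p : ℝ) (h : Disjoint S T) (f : Finset V → E) :
    bernoulliMean p (S ∪ T) f =
      bernoulliMean p S (fun U ↦ bernoulliMean p T (fun W ↦ f (U ∪ W))) := by
  induction S using Finset.induction_on generalizing f with
  | empty => simp [bernoulliMean_empty]
  | insert a S ha ih =>
    rw [disjoint_insert_left] at h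
    rw [insert_union, bernoulliMean_insert p (by simp [ha, h.1]), bernoulliMean_insert p ha,
      ih h.2, ih h.2]
    simp only [insert_union]

end Module

section Algebra

variable {E : Type*} [CommRing E] [Algebra ℝ E]

lemma bernoulliMean_const_mul (p : ℝ) (S : Finset V) (c : E) (f : Finset V → E) :
    bernoulliMean p S (fun U ↦ c * f U) = c * bernoulliMean p S f :=
  (map_bernoulliMean (LinearMap.mulLeft ℝ c) p S f).symm

lemma bernoulliMean_prod (p : ℝ) (S : Finset V) (g : V → E) :
    bernoulliMean p S (fun U ↦ ∏ u ∈ U, g u) = ∏ s ∈ S, (p • g s + algebraMap ℝ E (1 - p)) := by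
  classical
  induction S using Finset.induction_on with
  | empty => simp [bernoulliMean_empty]
  | insert a S ha ih =>
    have hprod : ∀ U ⊆ S, ∏ u ∈ insert a U, g u = g a * ∏ u ∈ U, g u :=
      fun U hU ↦ prod_insert fun h ↦ ha (hU h)
    rw [bernoulliMean_insert p ha, prod_insert ha, bernoulliMean_congr hprod,
      bernoulliMean_const_mul, ih, add_mul, smul_mul_assoc, Algebra.smul_def (1 - p)]

lemma bernoulliMean_const (p : ℝ) (S : Finset V) (c : E) : bernoulliMean p S (fun _ ↦ c) = c := by
  have hone : bernoulliMean p S (fun _ ↦ (1 : E)) = 1 := by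
    simpa [Algebra.smul_def] using bernoulliMean_prod p S (fun _ ↦ (1 : E))
  simpa [hone] using bernoulliMean_const_mul p S c (fun _ ↦ 1)

end Algebra

section Order

lemma bernoulliMean_mono (hp : p ∈ Set.Icc 0 1) {f g : Finset V → ℝ} (h : ∀ U ⊆ S, f U ≤ g U) :
    bernoulliMean p S f ≤ bernoulliMean p S g := by
  have hp' : 0 ≤ 1 - p := sub_nonneg.mpr hp.2
  refine sum_le_sum fun U hU ↦ ?_
  exact mul_le_mul_of_nonneg_left (h U (mem_powerset.mp hU))
    (mul_nonneg (pow_nonneg hp.1 _) (pow_nonneg hp' _))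

lemma bernoulliMean_le_of_forall_le (hp : p ∈ Set.Icc 0 1) {f : Finset V → ℝ} {c : ℝ}
    (h : ∀ U ⊆ S, f U ≤ c) : bernoulliMean p S f ≤ c :=
  (bernoulliMean_mono hp h).trans_eq (bernoulliMean_const p S c)

lemma bernoulliMean_nonneg (hp : p ∈ Set.Icc 0 1) {f : Finset V → ℝ} (h : ∀ U ⊆ S, 0 ≤ f U) :
    0 ≤ bernoulliMean p S f :=
  (bernoulliMean_const p S 0).symm.trans_le (bernoulliMean_mono hp h)

lemma norm_bernoulliMean_le {E : Type*} [SeminormedAddCommGroup E] [NormedSpace ℝ E]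
    (hp : p ∈ Set.Icc 0 1) (S : Finset V) (f : Finset V → E) :
    ‖bernoulliMean p S f‖ ≤ bernoulliMean p S (fun U ↦ ‖f U‖) := by
  have hp' : 0 ≤ 1 - p := sub_nonneg.mpr hp.2
  refine (norm_sum_le _ _).trans_eq (sum_congr rfl fun U _ ↦ ?_)
  rw [norm_smul, smul_eq_mul,
    Real.norm_of_nonneg (mul_nonneg (pow_nonneg hp.1 _) (pow_nonneg hp' _))]

lemma sq_bernoulliMean_le (hp : p ∈ Set.Icc 0 1) (S : Finset V) (f : Finset V → ℝ) :
    bernoulliMean p S f ^ 2 ≤ bernoulliMean p S (fun U ↦ f U ^ 2) := by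
  set m := bernoulliMean p S f with hm
  have hvar : 0 ≤ bernoulliMean p S (fun U ↦ (f U - m) ^ 2) :=
    bernoulliMean_nonneg hp fun U _ ↦ sq_nonneg _
  have hexpand : ∀ U ⊆ S, (f U - m) ^ 2 = f U ^ 2 + (-2 * m * f U + m ^ 2) := fun U _ ↦ by ring
  rw [bernoulliMean_congr hexpand, bernoulliMean_add, bernoulliMean_add, bernoulliMean_const_mul,
    bernoulliMean_const, ← hm] at hvar
  linarith

end Order

end BernoulliMean

section BernoulliProb

/-- The probability of the event `P U`, where `U` is the random subset of `S` which contains each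
element of `S` independently with probability `p`. -/
noncomputable def bernoulliProb {V : Type*} (p : ℝ) (S : Finset V) (P : Finset V → Prop) : ℝ :=
  bernoulliMean p S ({U | P U}.indicator 1)

/-- The probability of the event `P U W`, where `U` and `W` are independent random subsets of `S`,
each containing every element of `S` independently with probability `p`. -/
noncomputable def bernoulliPairProb {V : Type*} (p : ℝ) (S : Finset V)
    (P : Finset V → Finset V → Prop) : ℝ :=
  bernoulliMean p S fun U ↦ bernoulliProb p S (P U)

variable {V : Type*} {p : ℝ} {S T : Finset V} {P Q : Finset V → Prop}

lemma ofReal_bernoulliProb (p : ℝ) (S : Finset V) (P : Finset V → Prop) :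
    (bernoulliProb p S P : ℂ) = bernoulliMean p S ({U | P U}.indicator 1) := by
  refine (map_bernoulliMean Complex.ofRealCLM.toLinearMap p S _).trans
    (bernoulliMean_congr fun U _ ↦ ?_)
  by_cases h : P U <;> simp [h]

lemma bernoulliProb_nonneg (hp : p ∈ Set.Icc 0 1) : 0 ≤ bernoulliProb p S P :=
  bernoulliMean_nonneg hp fun _ _ ↦ Set.indicator_nonneg (fun _ _ ↦ zero_le_one) _

lemma bernoulliProb_le_one (hp : p ∈ Set.Icc 0 1) : bernoulliProb p S P ≤ 1 :=
  bernoulliMean_le_of_forall_le hp fun _ _ ↦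
    Set.indicator_le_self' (fun _ _ ↦ zero_le_one) _

lemma bernoulliProb_le_sum {ι : Type*} (hp : p ∈ Set.Icc 0 1) {J : Finset ι}
    {Q : ι → Finset V → Prop} (h : ∀ U ⊆ S, P U → ∃ j ∈ J, Q j U) :
    bernoulliProb p S P ≤ ∑ j ∈ J, bernoulliProb p S (Q j) := by
  have hnonneg (U : Finset V) (j : ι) : (0 : ℝ) ≤ {U | Q j U}.indicator 1 U :=
    Set.indicator_nonneg (fun _ _ ↦ zero_le_one) _
  refine (bernoulliMean_mono hp fun U hU ↦ ?_).trans_eq (bernoulliMean_sum p S J _)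
  by_cases hPU : P U
  · obtain ⟨j, hj, hQ⟩ := h U hU hPU
    refine le_trans ?_ (single_le_sum (fun i _ ↦ hnonneg U i) hj)
    simp [hPU, hQ]
  · simpa [hPU] using sum_nonneg fun i _ ↦ hnonneg U i

lemma bernoulliProb_mono (hp : p ∈ Set.Icc 0 1) (h : ∀ U ⊆ S, P U → Q U) :
    bernoulliProb p S P ≤ bernoulliProb p S Q := by
  simpa using bernoulliProb_le_sum (J := {()}) (Q := fun _ ↦ Q) hp (by simpa using h)

lemma bernoulliProb_union [DecidableEq V] (p : ℝ) (h : Disjoint S T) (P : Finset V → Prop) :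
    bernoulliProb p (S ∪ T) P = bernoulliMean p S fun U ↦ bernoulliProb p T fun W ↦ P (U ∪ W) :=
  bernoulliMean_union p h _

lemma bernoulliPairProb_le_sum {ι : Type*} (hp : p ∈ Set.Icc 0 1) {J : Finset ι}
    {P : Finset V → Finset V → Prop} {Q : ι → Finset V → Finset V → Prop}
    (h : ∀ U ⊆ S, ∀ W ⊆ S, P U W → ∃ j ∈ J, Q j U W) :
    bernoulliPairProb p S P ≤ ∑ j ∈ J, bernoulliPairProb p S (Q j) := by
  simp only [bernoulliPairProb, ← bernoulliMean_sum]
  exact bernoulliMean_mono hp fun U hU ↦ bernoulliProb_le_sum hp (h U hU)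

lemma bernoulliPairProb_le_add (hp : p ∈ Set.Icc 0 1) {P Q R : Finset V → Finset V → Prop}
    (h : ∀ U ⊆ S, ∀ W ⊆ S, P U W → Q U W ∨ R U W) :
    bernoulliPairProb p S P ≤ bernoulliPairProb p S Q + bernoulliPairProb p S R := by
  simpa using bernoulliPairProb_le_sum (J := univ) (Q := fun b : Bool ↦ if b then Q else R) hp
    (by simpa [or_comm] using h)

lemma bernoulliPairProb_swap (p : ℝ) (S : Finset V) (P : Finset V → Finset V → Prop) :
    bernoulliPairProb p S (fun U W ↦ P W U) = bernoulliPairProb p S P :=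
  bernoulliMean_comm p S S _

lemma bernoulliPairProb_le_of_forall_le (hp : p ∈ Set.Icc 0 1) {P : Finset V → Finset V → Prop}
    {c : ℝ} (h : ∀ W ⊆ S, bernoulliProb p S (P · W) ≤ c) : bernoulliPairProb p S P ≤ c := by
  rw [← bernoulliPairProb_swap]
  exact bernoulliMean_le_of_forall_le hp h

end BernoulliProb

section Independence

variable {ι V : Type*} [DecidableEq V] {P : ι → Finset V} {J : Finset ι}

lemma bernoulliMean_biUnion_prod {E : Type*} [CommRing E] [Algebra ℝ E] (p : ℝ)
    (hP : (J : Set ι).PairwiseDisjoint P) (f : ι → Finset V → E) :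
    bernoulliMean p (J.biUnion P) (fun U ↦ ∏ j ∈ J, f j (U ∩ P j)) =
      ∏ j ∈ J, bernoulliMean p (P j) (f j) := by
  classical
  induction J using Finset.induction_on with
  | empty => simp [bernoulliMean_empty]
  | insert j J hj ih =>
    rw [coe_insert, Set.pairwiseDisjoint_insert_of_notMem (by simpa using hj)] at hP
    have hdisj : Disjoint (P j) (J.biUnion P) :=
      (disjoint_biUnion_right ..).mpr fun i hi ↦ hP.2 i hi
    have hsplit : ∀ U ⊆ P j, ∀ W ⊆ J.biUnion P, ∏ i ∈ insert j J, f i ((U ∪ W) ∩ P i) =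
        f j U * ∏ i ∈ J, f i (W ∩ P i) := by
      intro U hU W hW
      rw [prod_insert hj, union_inter_distrib_right, inter_eq_left.mpr hU,
        disjoint_iff_inter_eq_empty.mp (disjoint_of_subset_left hW hdisj.symm), union_empty]
      congr 1
      refine prod_congr rfl fun i hi ↦ ?_
      rw [union_inter_distrib_right,
        disjoint_iff_inter_eq_empty.mp (disjoint_of_subset_left hU (hP.2 i hi)), empty_union]
    rw [biUnion_insert, bernoulliMean_union p hdisj, prod_insert hj, ← ih hP.1, mul_comm,
      ← bernoulliMean_const_mul]
    refine bernoulliMean_congr fun U hU ↦ ?_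
    rw [bernoulliMean_congr (hsplit U hU), bernoulliMean_const_mul, mul_comm]

lemma bernoulliProb_biUnion_forall_card_inter_eq (p : ℝ) (hP : (J : Set ι).PairwiseDisjoint P)
    (s : ι → ℕ) :
    bernoulliProb p (J.biUnion P) (fun U ↦ ∀ j ∈ J, #(U ∩ P j) = s j) =
      ∏ j ∈ J, bernoulliProb p (P j) (#· = s j) := by
  simp only [bernoulliProb]
  rw [← bernoulliMean_biUnion_prod p hP]
  refine bernoulliMean_congr fun U _ ↦ ?_
  classical simp [Set.indicator_apply, prod_boole]

end Independence

section Fourier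

lemma fourierChar_eq_one_iff {x : ℝ} : (𝐞 x : ℂ) = 1 ↔ ∃ m : ℤ, x = m := by
  rw [Real.fourierChar_apply, Complex.exp_eq_one_iff]
  refine exists_congr fun m ↦ ?_
  rw [← mul_assoc, mul_left_inj' Complex.I_ne_zero, mul_comm (m : ℂ)]
  norm_cast
  exact mul_right_inj' Real.two_pi_pos.ne'

lemma coe_fourierChar_sum {ι : Type*} (s : Finset ι) (f : ι → ℝ) :
    (𝐞 (∑ i ∈ s, f i) : ℂ) = ∏ i ∈ s, (𝐞 (f i) : ℂ) := by
  classical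
  induction s using Finset.induction_on with
  | empty => simp
  | insert i s hi ih =>
    rw [sum_insert hi, prod_insert hi, AddChar.map_add_eq_mul, Circle.coe_mul, ih]

lemma coe_fourierChar_sub (x y : ℝ) :
    (𝐞 (x - y) : ℂ) = 𝐞 x * (starRingEnd ℂ) (𝐞 y : ℂ) := by
  rw [AddChar.map_sub_eq_div, div_eq_mul_inv, Circle.coe_mul, Circle.coe_inv_eq_conj]

lemma sum_range_fourierChar_mul_div {N : ℕ} (hN : 0 < N) (k : ℤ) :
    ∑ t ∈ range N, (𝐞 (t * (k / N)) : ℂ) = if (N : ℤ) ∣ k then (N : ℂ) else 0 := by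
  have hN' : (N : ℝ) ≠ 0 := by positivity
  have hpow (t : ℕ) : (𝐞 (t * (k / N)) : ℂ) = (𝐞 (k / N) : ℂ) ^ t := by
    rw [← nsmul_eq_mul, AddChar.map_nsmul_eq_pow, Circle.coe_pow]
  have hdvd : (N : ℤ) ∣ k ↔ (𝐞 (k / N) : ℂ) = 1 := by
    rw [fourierChar_eq_one_iff]
    refine exists_congr fun m ↦ ?_
    rw [div_eq_iff hN', mul_comm]
    norm_cast
  simp only [hpow, hdvd]
  split_ifs with h
  · simp [h]
  · have hroot : (𝐞 (k / N) : ℂ) ^ N = 1 := by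
      rw [← hpow, mul_div_cancel₀ _ hN']
      exact fourierChar_eq_one_iff.mpr ⟨k, rfl⟩
    rw [geom_sum_eq h, hroot, sub_self, zero_div]

variable {V : Type*} {p : ℝ} {S : Finset V}

lemma natCast_mul_bernoulliMean_indicator_dvd {N : ℕ} (hN : 0 < N) (p : ℝ) (S : Finset V)
    (X : Finset V → ℤ) (x : ℤ) (f : Finset V → ℂ) :
    (N : ℂ) * bernoulliMean p S ({U | (N : ℤ) ∣ X U - x}.indicator f) =
      ∑ t ∈ range N, 𝐞 (-(t / N * x)) * bernoulliMean p S (fun U ↦ f U * 𝐞 (t / N * X U)) := by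
  simp only [← bernoulliMean_const_mul, ← bernoulliMean_sum]
  refine bernoulliMean_congr fun U _ ↦ ?_
  have hphase (t : ℕ) : 𝐞 (-(t / N * x)) * (f U * 𝐞 (t / N * X U)) =
      f U * (𝐞 (t * ((X U - x : ℤ) / N)) : ℂ) := by
    have harg : (t * ((X U - x : ℤ) / N) : ℝ) = -(t / N * x) + t / N * X U := by
      push_cast
      ring
    rw [harg, AddChar.map_add_eq_mul, Circle.coe_mul]
    ring
  simp only [hphase, ← mul_sum, sum_range_fourierChar_mul_div hN, Set.indicator_apply,
    Set.mem_ofPred_eq]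
  split_ifs <;> simp [mul_comm]

lemma norm_bernoulliMean_indicator_dvd_le {N : ℕ} (hN : 0 < N) (p : ℝ) (S : Finset V)
    (X : Finset V → ℤ) (x : ℤ) (f : Finset V → ℂ) :
    N * ‖bernoulliMean p S ({U | (N : ℤ) ∣ X U - x}.indicator f)‖ ≤
      ∑ t ∈ range N, ‖bernoulliMean p S (fun U ↦ f U * 𝐞 (t / N * X U))‖ := by
  have heq := congrArg norm (natCast_mul_bernoulliMean_indicator_dvd hN p S X x f)
  rw [norm_mul, Complex.norm_natCast] at heq
  refine heq.trans_le ((norm_sum_le _ _).trans_eq (sum_congr rfl fun t _ ↦ ?_))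
  rw [norm_mul, Circle.norm_coe, one_mul]

lemma norm_bernoulliMean_indicator_eq_le {Y : Finset V → ℤ} {y : ℤ} {N : ℕ}
    (hY : ∀ U ⊆ S, |Y U - y| < N) {f : Finset V → ℂ} {β : ℝ}
    (hβ : ∀ ψ : ℝ, ‖bernoulliMean p S (fun U ↦ f U * 𝐞 (ψ * Y U))‖ ≤ β) :
    ‖bernoulliMean p S ({U | Y U = y}.indicator f)‖ ≤ β := by
  have hN : 0 < N := by
    exact_mod_cast (abs_nonneg _).trans_lt (hY ∅ (empty_subset S))
  have hdvd : ∀ U ⊆ S, {U | Y U = y}.indicator f U = {U | (N : ℤ) ∣ Y U - y}.indicator f U := by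
    intro U hU
    have hiff : Y U = y ↔ (N : ℤ) ∣ Y U - y :=
      ⟨fun h ↦ by simp [h], fun h ↦ sub_eq_zero.mp (Int.eq_zero_of_abs_lt_dvd h (hY U hU))⟩
    by_cases h : Y U = y <;> simp [h, ← hiff]
  have hsum := (norm_bernoulliMean_indicator_dvd_le hN p S Y y f).trans
    (sum_le_card_nsmul _ _ β fun t _ ↦ hβ (t / N))
  rw [card_range, nsmul_eq_mul] at hsum
  rw [bernoulliMean_congr hdvd]
  exact le_of_mul_le_mul_left hsum (by exact_mod_cast hN)

/- Esseen-type inversion: the frequencies in `bad` contribute trivially, the others at most `β`. -/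
lemma bernoulliProb_eq_and_le (hp : p ∈ Set.Icc 0 1) {X : Finset V → ℤ} {Q : Finset V → Prop}
    {N : ℕ} (hN : 0 < N) {bad : Finset ℕ} {β : ℝ} (hβ₀ : 0 ≤ β)
    (hβ : ∀ t ∈ range N, t ∉ bad →
      ‖bernoulliMean p S ({U | Q U}.indicator fun U ↦ (𝐞 (t / N * X U) : ℂ))‖ ≤ β) (x : ℤ) :
    bernoulliProb p S (fun U ↦ X U = x ∧ Q U) ≤ #bad / N * bernoulliProb p S Q + β := by
  have hN' : (0 : ℝ) < N := by exact_mod_cast hN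
  set q := bernoulliProb p S Q
  have hq : 0 ≤ q := bernoulliProb_nonneg hp
  have hmul (t : ℕ) (U : Finset V) : {U | Q U}.indicator 1 U * (𝐞 (t / N * X U) : ℂ) =
      {U | Q U}.indicator (fun U ↦ (𝐞 (t / N * X U) : ℂ)) U := by
    by_cases h : Q U <;> simp [h]
  have hterm : ∀ t ∈ range N,
      ‖bernoulliMean p S (fun U ↦ {U | Q U}.indicator 1 U * (𝐞 (t / N * X U) : ℂ))‖ ≤
        (if t ∈ bad then q else 0) + β := by
    intro t ht
    split_ifs with hbad
    · refine (norm_bernoulliMean_le hp _ _).trans (le_add_of_le_of_nonneg (le_of_eq ?_) hβ₀)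
      refine bernoulliMean_congr fun U _ ↦ ?_
      rw [norm_mul, Circle.norm_coe, mul_one, norm_indicator_eq_indicator_norm]
      simp only [Pi.one_apply, norm_one]
      rfl
    · simp only [hmul, zero_add]
      exact hβ t ht hbad
  have hnorm : bernoulliProb p S (fun U ↦ (N : ℤ) ∣ X U - x ∧ Q U) =
      ‖bernoulliMean p S
        ({U | (N : ℤ) ∣ X U - x}.indicator ({U | Q U}.indicator (1 : Finset V → ℂ)))‖ := by
    rw [Set.indicator_indicator, Set.inter_def]
    simp only [Set.mem_ofPred_eq]
    rw [← ofReal_bernoulliProb, Complex.norm_real, Real.norm_of_nonneg (bernoulliProb_nonneg hp)]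
  refine (bernoulliProb_mono hp (Q := fun U ↦ (N : ℤ) ∣ X U - x ∧ Q U)
    fun U _ h ↦ ⟨by simp [h.1], h.2⟩).trans ?_
  have hmain := (norm_bernoulliMean_indicator_dvd_le hN p S X x _).trans (sum_le_sum hterm)
  rw [← hnorm, sum_add_distrib, sum_ite_mem, sum_const, sum_const, card_range, nsmul_eq_mul,
    nsmul_eq_mul] at hmain
  have hcard : (#(range N ∩ bad) : ℝ) * q ≤ #bad * q := by
    gcongr
    exact inter_subset_right
  refine le_of_mul_le_mul_left (hmain.trans ?_) hN'
  calc #(range N ∩ bad) * q + N * β ≤ #bad * q + N * β := by gcongr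
    _ = N * (#bad / N * q + β) := by field_simp

end Fourier

section BernoulliCharFun

lemma norm_sq_bernoulli_charFun (p x : ℝ) :
    ‖(p * 𝐞 x + (1 - p) : ℂ)‖ ^ 2 = 1 - 4 * (p * (1 - p)) * Real.sin (Real.pi * x) ^ 2 := by
  have hre_im : (p * 𝐞 x + (1 - p) : ℂ) =
      ((p * Real.cos (2 * (Real.pi * x)) + (1 - p) : ℝ) : ℂ) +
        ((p * Real.sin (2 * (Real.pi * x)) : ℝ) : ℂ) * Complex.I := by
    rw [Real.fourierChar_apply, Complex.exp_mul_I]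
    push_cast
    ring_nf
  rw [hre_im, ← Complex.normSq_eq_norm_sq, Complex.normSq_add_mul_I]
  linear_combination p ^ 2 * Real.sin_sq_add_cos_sq (2 * (Real.pi * x)) +
    2 * p * (1 - p) * Real.cos_two_mul' (Real.pi * x) +
    2 * p * (1 - p) * Real.sin_sq_add_cos_sq (Real.pi * x)

lemma norm_bernoulli_charFun_le_one {p : ℝ} (hp : p ∈ Set.Icc 0 1) (x : ℝ) :
    ‖(p * 𝐞 x + (1 - p) : ℂ)‖ ≤ 1 := by
  rw [← sq_le_one_iff₀ (norm_nonneg _), norm_sq_bernoulli_charFun]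
  have := mul_nonneg hp.1 (sub_nonneg.mpr hp.2)
  nlinarith [sq_nonneg (Real.sin (Real.pi * x))]

lemma two_mul_norm_le_abs_sin_pi_mul (x : ℝ) :
    2 * ‖(x : UnitAddCircle)‖ ≤ |Real.sin (Real.pi * x)| := by
  set d := x - round x with hd
  have hperiod : |Real.sin (Real.pi * x)| = |Real.sin (Real.pi * d)| := by
    have hx : Real.pi * x = Real.pi * d + round x * Real.pi := by
      rw [hd]
      ring
    rw [hx, Real.sin_add_int_mul_pi, abs_mul, abs_neg_one_zpow, one_mul]
  have hjordan := Real.mul_abs_le_abs_sin (x := Real.pi * d) (by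
    rw [abs_mul, abs_of_pos Real.pi_pos, div_eq_mul_one_div]
    exact mul_le_mul_of_nonneg_left (abs_sub_round x) Real.pi_pos.le)
  rw [UnitAddCircle.norm_eq, hperiod]
  refine le_of_eq_of_le ?_ hjordan
  rw [abs_mul, abs_of_pos Real.pi_pos, hd]
  field_simp

lemma norm_bernoulli_charFun_le {p : ℝ} (hp : p ∈ Set.Icc 0 1) (x : ℝ) :
    ‖(p * 𝐞 x + (1 - p) : ℂ)‖ ≤ Real.exp (-(8 * (p * (1 - p)) * ‖(x : UnitAddCircle)‖ ^ 2)) := by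
  have hpq : 0 ≤ p * (1 - p) := mul_nonneg hp.1 (sub_nonneg.mpr hp.2)
  have hsin : (2 * ‖(x : UnitAddCircle)‖) ^ 2 ≤ Real.sin (Real.pi * x) ^ 2 :=
    sq_le_sq.mpr ((abs_of_nonneg (by positivity)).trans_le (two_mul_norm_le_abs_sin_pi_mul x))
  refine le_of_sq_le_sq ?_ (Real.exp_pos _).le
  rw [norm_sq_bernoulli_charFun, ← Real.exp_nat_mul]
  refine le_trans ?_ (Real.add_one_le_exp _)
  push_cast
  nlinarith

lemma norm_bernoulli_charFun_le_of_le_norm {p : ℝ} (hp : p ∈ Set.Icc 0 1) {x ε : ℝ} (hε : 0 ≤ ε)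
    (hx : ε ≤ ‖(x : UnitAddCircle)‖) :
    ‖(p * 𝐞 x + (1 - p) : ℂ)‖ ≤ Real.exp (-(8 * (p * (1 - p)) * ε ^ 2)) := by
  have hpq : 0 ≤ p * (1 - p) := mul_nonneg hp.1 (sub_nonneg.mpr hp.2)
  refine (norm_bernoulli_charFun_le hp x).trans (Real.exp_le_exp.mpr (neg_le_neg ?_))
  gcongr

end BernoulliCharFun

section PointProbability

lemma card_filter_abs_div_sub_le {N : ℕ} (hN : 0 < N) (r : ℝ) {κ : ℝ} (hκ : 0 ≤ κ) :
    (#{t ∈ range N | |((t : ℕ) : ℝ) / N - r| ≤ κ} : ℝ) ≤ 2 * κ * N + 1 := by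
  have hN' : (0 : ℝ) < N := by exact_mod_cast hN
  have hcard : #{t ∈ range N | |((t : ℕ) : ℝ) / N - r| ≤ κ} ≤
      #(Icc ⌈N * (r - κ)⌉ ⌊N * (r + κ)⌋) := by
    refine card_le_card_of_injOn (fun t ↦ (t : ℤ)) (fun t ht ↦ ?_) (by simp)
    obtain ⟨hlo, hhi⟩ := abs_le.mp (mem_filter.mp ht).2
    rw [le_sub_iff_add_le, le_div_iff₀ hN'] at hlo
    rw [sub_le_iff_le_add, div_le_iff₀ hN'] at hhi
    rw [coe_Icc, Set.mem_Icc, Int.ceil_le, Int.le_floor, Int.cast_natCast]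
    constructor <;> linarith
  refine (Nat.cast_le.mpr hcard).trans ?_
  have hlen : (⌊N * (r + κ)⌋ + 1 - ⌈N * (r - κ)⌉ : ℝ) ≤ 2 * κ * N + 1 := by
    linarith [Int.floor_le (N * (r + κ)), Int.le_ceil (N * (r - κ))]
  rw [Int.card_Icc, ← Int.cast_natCast, Int.toNat_eq_max]
  push_cast
  exact max_le hlen (by positivity)

lemma card_filter_norm_div_le {N : ℕ} (hN : 0 < N) {ε : ℝ} (hε : 0 ≤ ε) :
    (#{t ∈ range N | ‖((((t : ℕ) : ℝ) / N : ℝ) : UnitAddCircle)‖ ≤ ε} : ℝ) ≤ 4 * ε * N + 2 := by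
  have hN' : (0 : ℝ) < N := by exact_mod_cast hN
  have hsub : {t ∈ range N | ‖((((t : ℕ) : ℝ) / N : ℝ) : UnitAddCircle)‖ ≤ ε} ⊆
      {t ∈ range N | |((t : ℕ) : ℝ) / N - 0| ≤ ε} ∪
        {t ∈ range N | |((t : ℕ) : ℝ) / N - 1| ≤ ε} := by
    intro t ht
    rw [mem_filter, mem_range, UnitAddCircle.norm_eq] at ht
    rw [← filter_or, mem_filter, mem_range]
    refine ⟨ht.1, ?_⟩
    have ht0 : 0 ≤ (t : ℝ) / N := by positivity
    have ht1 : (t : ℝ) / N < 1 := (div_lt_one hN').mpr (by exact_mod_cast ht.1)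
    rcases le_or_gt (1 / 2 : ℝ) ((t : ℝ) / N) with h | h
    · have hround : round ((t : ℝ) / N) = 1 := by
        rw [round_eq, Int.floor_eq_iff]
        constructor <;> push_cast <;> linarith
      exact Or.inr (by simpa [hround] using ht.2)
    · have hround : round ((t : ℝ) / N) = 0 := by
        rw [round_eq, Int.floor_eq_iff]
        constructor <;> push_cast <;> linarith
      exact Or.inl (by simpa [hround] using ht.2)
  have hcard := (card_le_card hsub).trans (card_union_le _ _)
  calc (#{t ∈ range N | ‖((((t : ℕ) : ℝ) / N : ℝ) : UnitAddCircle)‖ ≤ ε} : ℝ)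
      ≤ #{t ∈ range N | |((t : ℕ) : ℝ) / N - 0| ≤ ε} +
        #{t ∈ range N | |((t : ℕ) : ℝ) / N - 1| ≤ ε} := by exact_mod_cast hcard
    _ ≤ (2 * ε * N + 1) + (2 * ε * N + 1) :=
      add_le_add (card_filter_abs_div_sub_le hN 0 hε) (card_filter_abs_div_sub_le hN 1 hε)
    _ = 4 * ε * N + 2 := by ring

variable {V : Type*} {p : ℝ}

lemma bernoulliMean_fourierChar_mul_card (p : ℝ) (S : Finset V) (θ : ℝ) :
    bernoulliMean p S (fun U ↦ (𝐞 (θ * #U) : ℂ)) = (p * 𝐞 θ + (1 - p)) ^ #S := by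
  have hprod (U : Finset V) : (𝐞 (θ * #U) : ℂ) = ∏ _u ∈ U, (𝐞 θ : ℂ) := by
    rw [← coe_fourierChar_sum, sum_const, nsmul_eq_mul, mul_comm]
  simp only [hprod, bernoulliMean_prod]
  simp

lemma bernoulliProb_card_eq_le (hp : p ∈ Set.Icc 0 1) (S : Finset V) (s : ℕ) {ε : ℝ} (hε : 0 < ε) :
    bernoulliProb p S (#· = s) ≤ 5 * ε + Real.exp (-(8 * (p * (1 - p)) * ε ^ 2 * #S)) := by
  set β := Real.exp (-(8 * (p * (1 - p)) * ε ^ 2 * #S)) with hβ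
  obtain ⟨N, hN⟩ := exists_nat_gt (2 / ε)
  have hN' : (0 : ℝ) < N := (div_pos two_pos hε).trans hN
  have hN₀ : 0 < N := by exact_mod_cast hN'
  have hcharFun : ∀ t ∈ range N,
      t ∉ ({t ∈ range N | ‖((((t : ℕ) : ℝ) / N : ℝ) : UnitAddCircle)‖ ≤ ε} : Finset ℕ) →
      ‖bernoulliMean p S ({_U | True}.indicator fun U ↦ (𝐞 (t / N * (#U : ℤ)) : ℂ))‖ ≤ β := by
    intro t ht hgood
    rw [mem_filter, not_and, not_le] at hgood
    simp only [Set.ofPred_true, Set.indicator_univ, Int.cast_natCast,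
      bernoulliMean_fourierChar_mul_card, norm_pow]
    refine (pow_le_pow_left₀ (norm_nonneg _)
      (norm_bernoulli_charFun_le_of_le_norm hp hε.le (hgood ht).le) _).trans_eq ?_
    rw [← Real.exp_nat_mul, hβ]
    ring_nf
  have hmain := bernoulliProb_eq_and_le hp hN₀ (Real.exp_pos _).le hcharFun s
  simp only [and_true, Nat.cast_inj] at hmain
  have hbad := card_filter_norm_div_le hN₀ hε.le
  rw [div_lt_iff₀ hε] at hN
  refine hmain.trans (add_le_add_left ?_ β)
  refine (mul_le_of_le_one_right (by positivity) (bernoulliProb_le_one hp)).trans ?_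
  rw [div_le_iff₀ hN']
  linarith

end PointProbability

section Decoupling

variable {V : Type*} {p : ℝ}

lemma ofReal_norm_bernoulliMean_sq (p : ℝ) (S : Finset V) (f : Finset V → ℂ) :
    ((‖bernoulliMean p S f‖ ^ 2 : ℝ) : ℂ) =
      bernoulliMean p S fun U ↦ bernoulliMean p S fun W ↦ f U * (starRingEnd ℂ) (f W) := by
  have hconj : (starRingEnd ℂ) (bernoulliMean p S f) =
      bernoulliMean p S fun W ↦ (starRingEnd ℂ) (f W) :=
    map_bernoulliMean Complex.conjAe.toLinearMap p S f
  rw [← Complex.normSq_eq_norm_sq, ← Complex.mul_conj, mul_comm, ← bernoulliMean_const_mul]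
  refine bernoulliMean_congr fun U _ ↦ ?_
  rw [bernoulliMean_const_mul, hconj, mul_comm]

lemma norm_sq_bernoulliMean_bernoulliMean_le (hp : p ∈ Set.Icc 0 1) (A B : Finset V)
    {g h : Finset V → ℂ} (hg : ∀ U, ‖g U‖ ≤ 1) (hh : ∀ U, ‖h U‖ ≤ 1)
    (φ : V → Finset V → ℝ) :
    ‖bernoulliMean p A fun a ↦ bernoulliMean p B fun b ↦ g a * (h b * 𝐞 (∑ x ∈ a, φ x b))‖ ^ 2 ≤
      bernoulliMean p B fun b ↦ bernoulliMean p B fun b' ↦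
        ∏ x ∈ A, ‖(p * 𝐞 (φ x b - φ x b') + (1 - p) : ℂ)‖ := by
  set F : Finset V → ℂ := fun a ↦ bernoulliMean p B fun b ↦ h b * 𝐞 (∑ x ∈ a, φ x b)
  have hjensen : ‖bernoulliMean p A fun a ↦ bernoulliMean p B fun b ↦
      g a * (h b * 𝐞 (∑ x ∈ a, φ x b))‖ ^ 2 ≤ bernoulliMean p A fun a ↦ ‖F a‖ ^ 2 := by
    refine (pow_le_pow_left₀ (norm_nonneg _) ?_ 2).trans (sq_bernoulliMean_le hp A fun a ↦ ‖F a‖)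
    refine (norm_bernoulliMean_le hp _ _).trans (bernoulliMean_mono hp fun a _ ↦ ?_)
    rw [bernoulliMean_const_mul, norm_mul]
    exact mul_le_of_le_one_left (norm_nonneg _) (hg a)
  have hcross (a b b' : Finset V) :
      h b * 𝐞 (∑ x ∈ a, φ x b) * (starRingEnd ℂ) (h b' * 𝐞 (∑ x ∈ a, φ x b')) =
        h b * (starRingEnd ℂ) (h b') * ∏ x ∈ a, (𝐞 (φ x b - φ x b') : ℂ) := by
    rw [← coe_fourierChar_sum, sum_sub_distrib, coe_fourierChar_sub, map_mul]
    ring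
  have hexpand : ((bernoulliMean p A fun a ↦ ‖F a‖ ^ 2 : ℝ) : ℂ) =
      bernoulliMean p B fun b ↦ bernoulliMean p B fun b' ↦ h b * (starRingEnd ℂ) (h b') *
        ∏ x ∈ A, (p * 𝐞 (φ x b - φ x b') + (1 - p) : ℂ) := by
    refine (map_bernoulliMean Complex.ofRealCLM.toLinearMap p A _).trans ?_
    simp only [ContinuousLinearMap.coe_coe, Complex.ofRealCLM_apply, F,
      ofReal_norm_bernoulliMean_sq, hcross]
    rw [bernoulliMean_comm]
    refine bernoulliMean_congr fun b _ ↦ ?_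
    rw [bernoulliMean_comm]
    simp [bernoulliMean_const_mul, bernoulliMean_prod]
  refine hjensen.trans ((Real.le_norm_self _).trans ?_)
  rw [← Complex.norm_real, hexpand]
  refine (norm_bernoulliMean_le hp _ _).trans (bernoulliMean_mono hp fun b _ ↦ ?_)
  refine (norm_bernoulliMean_le hp _ _).trans (bernoulliMean_mono hp fun b' _ ↦ ?_)
  rw [norm_mul, norm_mul, norm_prod, RCLike.norm_conj]
  exact mul_le_of_le_one_left (prod_nonneg fun _ _ ↦ norm_nonneg _)
    (mul_le_one₀ (hh b) (norm_nonneg _) (hh b'))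

end Decoupling

section Anticoncentration

/-- `f` takes some `L` linearly independent values at least `t` times each on `B`. This forces
every fibre of the subset sum `U ↦ ∑ y ∈ U, f y` to be hit with tiny probability. -/
def HasPopularFrame {V E : Type*} [AddCommGroup E] [Module ℝ E] [DecidableEq E] (f : V → E)
    (B : Finset V) (L t : ℕ) : Prop :=
  ∃ v : Fin L → E, LinearIndependent ℝ v ∧ ∀ j, t ≤ #{b ∈ B | f b = v j}

variable {V E : Type*} [AddCommGroup E] [Module ℝ E] {p : ℝ}

lemma card_inter_eq_of_sum_eq [DecidableEq V] {ι : Type*} [Fintype ι] {f : V → E} {v : ι → E}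
    (hv : LinearIndependent ℝ v) {P : ι → Finset V} (hP : Pairwise (Disjoint on P))
    (hf : ∀ j, ∀ y ∈ P j, f y = v j) {U W : Finset V} (hU : U ⊆ univ.biUnion P)
    (hW : W ⊆ univ.biUnion P) (h : ∑ y ∈ U, f y = ∑ y ∈ W, f y) (j : ι) :
    #(U ∩ P j) = #(W ∩ P j) := by
  have hsum : ∀ D ⊆ univ.biUnion P, ∑ y ∈ D, f y = ∑ j, (#(D ∩ P j) : ℝ) • v j := by
    intro D hD
    conv_lhs => rw [← inter_eq_left.mpr hD, inter_biUnion]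
    rw [sum_biUnion fun i _ j _ hij ↦
      (hP hij).mono inter_subset_right inter_subset_right]
    refine sum_congr rfl fun j _ ↦ ?_
    rw [sum_congr rfl fun y hy ↦ hf j y (mem_inter.mp hy).2, sum_const, Nat.cast_smul_eq_nsmul]
  rw [hsum U hU, hsum W hW] at h
  exact_mod_cast (Fintype.linearIndependent_iffₛ.mp hv _ _ h) j

lemma HasPopularFrame.bernoulliProb_sum_eq_le [DecidableEq E] {f : V → E} {B : Finset V} {L t : ℕ}
    (hf : HasPopularFrame f B L t) (hp : p ∈ Set.Icc 0 1) {ρ : ℝ}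
    (hρ : ∀ P : Finset V, t ≤ #P → ∀ s, bernoulliProb p P (#· = s) ≤ ρ) (c : E) :
    bernoulliProb p B (fun U ↦ ∑ y ∈ U, f y = c) ≤ ρ ^ L := by
  classical
  obtain ⟨v, hv, hpop⟩ := hf
  set P : Fin L → Finset V := fun j ↦ {b ∈ B | f b = v j}
  have hfP : ∀ j, ∀ y ∈ P j, f y = v j := fun j y hy ↦ (mem_filter.mp hy).2
  have hdisj : Pairwise (Disjoint on P) := fun i j hij ↦ disjoint_left.mpr fun y hi hj ↦
    hij (hv.injective ((hfP i y hi).symm.trans (hfP j y hj)))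
  set D := univ.biUnion P
  have hDB : D ⊆ B := biUnion_subset.mpr fun j _ ↦ filter_subset _ _
  rw [← sdiff_union_of_subset hDB, bernoulliProb_union p sdiff_disjoint]
  refine bernoulliMean_le_of_forall_le hp fun W hW ↦ ?_
  have hsum : ∀ U ⊆ D, ∑ y ∈ W ∪ U, f y = ∑ y ∈ W, f y + ∑ y ∈ U, f y := fun U hU ↦
    sum_union (disjoint_of_subset_left hW (disjoint_of_subset_right hU sdiff_disjoint))
  obtain ⟨s, hs⟩ : ∃ s : Fin L → ℕ, ∀ U ⊆ D, ∑ y ∈ W ∪ U, f y = c →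
      ∀ j ∈ univ, #(U ∩ P j) = s j := by
    by_cases hex : ∃ U₀ ⊆ D, ∑ y ∈ W ∪ U₀, f y = c
    · obtain ⟨U₀, hU₀, hc⟩ := hex
      refine ⟨fun j ↦ #(U₀ ∩ P j), fun U hU h j _ ↦ ?_⟩
      rw [← hc, hsum U hU, hsum U₀ hU₀, add_right_inj] at h
      exact card_inter_eq_of_sum_eq hv hdisj hfP hU hU₀ h j
    · exact ⟨0, fun U hU h ↦ (hex ⟨U, hU, h⟩).elim⟩
  refine (bernoulliProb_mono hp hs).trans ?_
  rw [bernoulliProb_biUnion_forall_card_inter_eq p (hdisj.set_pairwise _) s]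
  calc ∏ j, bernoulliProb p (P j) (#· = s j)
      ≤ ∏ _j : Fin L, ρ :=
        prod_le_prod (fun j _ ↦ bernoulliProb_nonneg hp) fun j _ ↦ hρ (P j) (hpop j) (s j)
    _ = ρ ^ L := by simp

end Anticoncentration

section Chernoff

lemma bernoulli_mgf_mul_mgf_neg_le (p x : ℝ) :
    (p * Real.exp x + (1 - p)) * (p * Real.exp (-x) + (1 - p)) ≤ Real.exp (x ^ 2 / 2) := by
  have hcosh := Real.cosh_le_exp_half_sq x
  have hone := Real.one_le_cosh x
  have hexp : Real.exp x * Real.exp (-x) = 1 := by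
    rw [← Real.exp_add, add_neg_cancel, Real.exp_zero]
  have hpq' : p * (1 - p) ≤ 1 / 2 := by nlinarith [sq_nonneg (p - 1 / 2)]
  calc (p * Real.exp x + (1 - p)) * (p * Real.exp (-x) + (1 - p))
      = 1 + 2 * (p * (1 - p)) * (Real.cosh x - 1) := by
        rw [Real.cosh_eq]
        linear_combination p ^ 2 * hexp
    _ ≤ Real.cosh x := by nlinarith
    _ ≤ Real.exp (x ^ 2 / 2) := hcosh

variable {V : Type*} {p : ℝ} {m : V → ℝ}

lemma bernoulliMean_exp_sum (p : ℝ) (B : Finset V) (m : V → ℝ) :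
    bernoulliMean p B (fun b ↦ Real.exp (∑ y ∈ b, m y)) =
      ∏ y ∈ B, (p * Real.exp (m y) + (1 - p)) := by
  simp [Real.exp_sum, bernoulliMean_prod]

lemma bernoulliPairProb_lt_sub_le (hp : p ∈ Set.Icc 0 1) (B : Finset V) (hm : ∀ y, |m y| ≤ 1)
    {l : ℝ} (hl : 0 ≤ l) (Z : ℝ) :
    bernoulliPairProb p B (fun b b' ↦ Z < ∑ y ∈ b, m y - ∑ y ∈ b', m y) ≤
      Real.exp (l ^ 2 / 2 * #B - l * Z) := by
  have hmarkov : ∀ b b' : Finset V,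
      {b' | Z < ∑ y ∈ b, m y - ∑ y ∈ b', m y}.indicator (1 : Finset V → ℝ) b' ≤
        Real.exp (-(l * Z)) * Real.exp (∑ y ∈ b, l * m y) * Real.exp (∑ y ∈ b', -(l * m y)) := by
    intro b b'
    refine Set.indicator_apply_le' (fun h ↦ ?_) fun _ ↦ by positivity
    rw [← Real.exp_add, ← Real.exp_add, sum_neg_distrib, ← mul_sum, ← mul_sum]
    refine Real.one_le_exp ?_
    linarith [mul_le_mul_of_nonneg_left (le_of_lt h) hl]
  have hfactor : ∀ y ∈ B, (p * Real.exp (l * m y) + (1 - p)) *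
      (p * Real.exp (-(l * m y)) + (1 - p)) ≤ Real.exp (l ^ 2 / 2) := by
    intro y _
    refine (bernoulli_mgf_mul_mgf_neg_le p _).trans (Real.exp_le_exp.mpr ?_)
    rw [mul_pow]
    gcongr
    exact mul_le_of_le_one_right (sq_nonneg l) ((sq_le_one_iff_abs_le_one _).mpr (hm y))
  have hp' : 0 ≤ 1 - p := sub_nonneg.mpr hp.2
  have hp₀ : 0 ≤ p := hp.1
  calc bernoulliPairProb p B (fun b b' ↦ Z < ∑ y ∈ b, m y - ∑ y ∈ b', m y)
      ≤ bernoulliMean p B fun b ↦ bernoulliMean p B fun b' ↦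
        Real.exp (-(l * Z)) * Real.exp (∑ y ∈ b, l * m y) * Real.exp (∑ y ∈ b', -(l * m y)) :=
        bernoulliMean_mono hp fun b _ ↦ bernoulliMean_mono hp fun b' _ ↦ hmarkov b b'
    _ = Real.exp (-(l * Z)) * ∏ y ∈ B, (p * Real.exp (l * m y) + (1 - p)) *
        (p * Real.exp (-(l * m y)) + (1 - p)) := by
        simp_rw [bernoulliMean_const_mul, bernoulliMean_exp_sum,
          mul_comm _ (∏ y ∈ B, (p * Real.exp (-(l * m y)) + (1 - p))), bernoulliMean_const_mul,
          bernoulliMean_exp_sum, prod_mul_distrib]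
        ring
    _ ≤ Real.exp (-(l * Z)) * ∏ _y ∈ B, Real.exp (l ^ 2 / 2) := by
        gcongr with y hy
        exact hfactor y hy
    _ = Real.exp (l ^ 2 / 2 * #B - l * Z) := by
        rw [prod_const, ← Real.exp_nat_mul, ← Real.exp_add]
        ring_nf

lemma bernoulliPairProb_lt_abs_sub_le (hp : p ∈ Set.Icc 0 1) (B : Finset V)
    (hm : ∀ y, |m y| ≤ 1) {l : ℝ} (hl : 0 ≤ l) (Z : ℝ) :
    bernoulliPairProb p B (fun b b' ↦ Z < |∑ y ∈ b, m y - ∑ y ∈ b', m y|) ≤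
      2 * Real.exp (l ^ 2 / 2 * #B - l * Z) := by
  have htail := bernoulliPairProb_lt_sub_le hp B hm hl Z
  have htail' := (bernoulliPairProb_swap p B _).trans_le htail
  refine (bernoulliPairProb_le_add hp fun b _ b' _ h ↦ ?_).trans
    ((add_le_add htail htail').trans_eq (two_mul _).symm)
  rwa [lt_abs, neg_sub] at h

end Chernoff

section RichTuples

/-- The row sum `∑ y ∈ U, M x y`. For an adjacency matrix this is the number of neighbours of `x`
in `U`. -/
def rowSum {V : Type*} (M : V → V → ℤ) (x : V) (U : Finset V) : ℤ :=
  ∑ y ∈ U, M x y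

/-- The real vector `(M (a 0) y, …, M (a (L - 1)) y)` of entries of the column `y` of `M` in the
rows listed by `a`. -/
def rowPattern {V : Type*} {L : ℕ} (M : V → V → ℤ) (a : Fin L → V) (y : V) : Fin L → ℝ :=
  fun i ↦ M (a i) y

/-- The integers `z ∈ [-Z, Z]` for which `θ * z` is within `ε` of an integer. -/
noncomputable def nearSet (θ ε : ℝ) (Z : ℕ) : Finset ℤ :=
  {z ∈ Icc (-(Z : ℤ)) Z | ‖((θ * z : ℝ) : UnitAddCircle)‖ ≤ ε}

variable {V : Type*} {p : ℝ} {M : V → V → ℤ} {B : Finset V} {L t : ℕ}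

lemma HasPopularFrame.bernoulliProb_rowSum_eq_le {a : Fin L → V}
    (ha : HasPopularFrame (rowPattern M a) B L t) (hp : p ∈ Set.Icc 0 1) {ρ : ℝ}
    (hρ : ∀ P : Finset V, t ≤ #P → ∀ s, bernoulliProb p P (#· = s) ≤ ρ) (c : Fin L → ℤ) :
    bernoulliProb p B (fun U ↦ ∀ i, rowSum M (a i) U = c i) ≤ ρ ^ L := by
  refine (bernoulliProb_mono hp fun U _ h ↦ ?_).trans
    (ha.bernoulliProb_sum_eq_le hp hρ fun i ↦ (c i : ℝ))
  funext i
  rw [Finset.sum_apply, ← h i, rowSum]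
  push_cast
  rfl

lemma HasPopularFrame.bernoulliPairProb_norm_rowSum_le (hM : ∀ x y, |M x y| ≤ 1) {a : Fin L → V}
    (ha : HasPopularFrame (rowPattern M a) B L t) (hp : p ∈ Set.Icc 0 1) {ρ : ℝ}
    (hρ : ∀ P : Finset V, t ≤ #P → ∀ s, bernoulliProb p P (#· = s) ≤ ρ) (θ ε : ℝ) (Z : ℕ)
    {l : ℝ} (hl : 0 ≤ l) :
    bernoulliPairProb p B (fun b b' ↦ ∀ i,
        ‖((θ * (rowSum M (a i) b - rowSum M (a i) b' : ℤ) : ℝ) : UnitAddCircle)‖ ≤ ε) ≤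
      L * (2 * Real.exp (l ^ 2 / 2 * #B - l * Z)) + (#(nearSet θ ε Z) * ρ) ^ L := by
  set z : Fin L → Finset V → ℤ := fun i ↦ rowSum M (a i)
  have hlarge : bernoulliPairProb p B (fun b b' ↦ ∃ i, (Z : ℤ) < |z i b - z i b'|) ≤
      L * (2 * Real.exp (l ^ 2 / 2 * #B - l * Z)) := by
    refine (bernoulliPairProb_le_sum hp (J := univ) fun b _ b' _ ⟨i, hi⟩ ↦
      ⟨i, mem_univ i, hi⟩).trans ((sum_le_card_nsmul _ _ (2 * Real.exp (l ^ 2 / 2 * #B - l * Z))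
        fun i _ ↦ ?_).trans_eq (by simp))
    have htail := bernoulliPairProb_lt_abs_sub_le hp B (m := fun y ↦ (M (a i) y : ℝ))
      (fun y ↦ by exact_mod_cast hM (a i) y) hl Z
    simp only [z, rowSum]
    exact_mod_cast htail
  have hnear : bernoulliPairProb p B (fun b b' ↦ ∃ u ∈ Fintype.piFinset fun _ ↦ nearSet θ ε Z,
      ∀ i, z i b = u i + z i b') ≤ (#(nearSet θ ε Z) * ρ) ^ L := by
    refine (bernoulliPairProb_le_sum hp fun b _ b' _ h ↦ h).trans
      ((sum_le_card_nsmul _ _ (ρ ^ L) fun u _ ↦ ?_).trans_eq (by simp [mul_pow]))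
    exact bernoulliPairProb_le_of_forall_le hp fun b' _ ↦
      ha.bernoulliProb_rowSum_eq_le hp hρ fun i ↦ u i + z i b'
  refine (bernoulliPairProb_le_add hp fun b _ b' _ h ↦ ?_).trans (add_le_add hlarge hnear)
  rw [or_iff_not_imp_left]
  intro hsmall
  push Not at hsmall
  refine ⟨fun i ↦ z i b - z i b', Fintype.mem_piFinset.mpr fun i ↦ ?_, fun i ↦ by ring⟩
  exact mem_filter.mpr ⟨mem_Icc.mpr (abs_le.mp (hsmall i)), h i⟩

/-- `m` tuples of length `L` in `A`, no vertex occurring in two of them, whose patterns each have a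
popular frame on `B`. -/
structure IsRichFamily {m : ℕ} (M : V → V → ℤ) (A B : Finset V) (t : ℕ)
    (τ : Fin m → Fin L → V) : Prop where
  mem : ∀ s i, τ s i ∈ A
  hasPopularFrame : ∀ s, HasPopularFrame (rowPattern M (τ s)) B L t
  eq_of_eq : ∀ s s' i i', τ s i = τ s' i' → s = s'

lemma IsRichFamily.prod_norm_charFun_le {m : ℕ} {A : Finset V} {τ : Fin m → Fin L → V}
    (hτ : IsRichFamily M A B t τ) (hp : p ∈ Set.Icc 0 1) {ε : ℝ} (hε : 0 ≤ ε) {α : V → ℝ}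
    (hα : ∀ s, ∃ i, ε ≤ ‖(α (τ s i) : UnitAddCircle)‖) :
    ∏ x ∈ A, ‖(p * 𝐞 (α x) + (1 - p) : ℂ)‖ ≤ Real.exp (-(8 * (p * (1 - p)) * ε ^ 2 * m)) := by
  classical
  choose i hi using hα
  have hinj : Function.Injective fun s ↦ τ s (i s) := fun s s' h ↦ hτ.eq_of_eq _ _ _ _ h
  calc ∏ x ∈ A, ‖(p * 𝐞 (α x) + (1 - p) : ℂ)‖
      ≤ ∏ x ∈ univ.image fun s ↦ τ s (i s), ‖(p * 𝐞 (α x) + (1 - p) : ℂ)‖ :=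
        prod_le_prod_of_subset_of_le_one
          (image_subset_iff.mpr fun s _ ↦ hτ.mem s (i s)) (fun _ _ ↦ norm_nonneg _)
          fun x _ _ ↦ norm_bernoulli_charFun_le_one hp _
    _ = ∏ s, ‖(p * 𝐞 (α (τ s (i s))) + (1 - p) : ℂ)‖ := prod_image hinj.injOn
    _ ≤ ∏ _s : Fin m, Real.exp (-(8 * (p * (1 - p)) * ε ^ 2)) :=
        prod_le_prod (fun _ _ ↦ norm_nonneg _) fun s _ ↦
          norm_bernoulli_charFun_le_of_le_norm hp hε (hi s)
    _ = Real.exp (-(8 * (p * (1 - p)) * ε ^ 2 * m)) := by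
        rw [prod_const, card_univ, Fintype.card_fin, ← Real.exp_nat_mul]
        ring_nf

lemma IsRichFamily.bernoulliMean_prod_norm_charFun_le (hM : ∀ x y, |M x y| ≤ 1) {m : ℕ}
    {A : Finset V} {τ : Fin m → Fin L → V} (hτ : IsRichFamily M A B t τ) (hp : p ∈ Set.Icc 0 1)
    {ρ : ℝ} (hρ : ∀ P : Finset V, t ≤ #P → ∀ s, bernoulliProb p P (#· = s) ≤ ρ) (θ : ℝ) {ε : ℝ}
    (hε : 0 ≤ ε) (Z : ℕ) {l : ℝ} (hl : 0 ≤ l) :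
    (bernoulliMean p B fun b ↦ bernoulliMean p B fun b' ↦
        ∏ x ∈ A, ‖(p * 𝐞 (θ * rowSum M x b - θ * rowSum M x b') + (1 - p) : ℂ)‖) ≤
      Real.exp (-(8 * (p * (1 - p)) * ε ^ 2 * m)) +
        m * (L * (2 * Real.exp (l ^ 2 / 2 * #B - l * Z)) + (#(nearSet θ ε Z) * ρ) ^ L) := by
  set E := Real.exp (-(8 * (p * (1 - p)) * ε ^ 2 * m))
  set near : Fin m → Finset V → Finset V → Prop := fun s b b' ↦ ∀ i,
    ‖((θ * (rowSum M (τ s i) b - rowSum M (τ s i) b' : ℤ) : ℝ) : UnitAddCircle)‖ ≤ ε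
  have hpoint (b b' : Finset V) :
      ∏ x ∈ A, ‖(p * 𝐞 (θ * rowSum M x b - θ * rowSum M x b') + (1 - p) : ℂ)‖ ≤
        E + {b' | ∃ s, near s b b'}.indicator (1 : Finset V → ℝ) b' := by
    by_cases hnear : ∃ s, near s b b'
    · rw [Set.indicator_of_mem (by exact hnear), Pi.one_apply]
      exact (prod_le_one (fun _ _ ↦ norm_nonneg _) fun x _ ↦
        norm_bernoulli_charFun_le_one hp _).trans (le_add_of_nonneg_left (Real.exp_pos _).le)
    · rw [Set.indicator_of_notMem (by exact hnear), add_zero]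
      simp only [near, not_exists, not_forall, not_le] at hnear
      refine hτ.prod_norm_charFun_le hp hε fun s ↦ (hnear s).imp fun i hi ↦ ?_
      rw [Int.cast_sub, mul_sub] at hi
      exact hi.le
  set κ := L * (2 * Real.exp (l ^ 2 / 2 * #B - l * Z)) + (#(nearSet θ ε Z) * ρ) ^ L
  have hprob : bernoulliPairProb p B (fun b b' ↦ ∃ s, near s b b') ≤ m * κ := by
    refine (bernoulliPairProb_le_sum hp (J := univ) fun b _ b' _ ⟨s, hs⟩ ↦
      ⟨s, mem_univ s, hs⟩).trans
      ((sum_le_card_nsmul _ _ κ fun s _ ↦ ?_).trans_eq (by simp))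
    exact (hτ.hasPopularFrame s).bernoulliPairProb_norm_rowSum_le hM hp hρ θ ε Z hl
  refine (bernoulliMean_mono hp fun b _ ↦ bernoulliMean_mono hp fun b' _ ↦ hpoint b b').trans ?_
  simp only [bernoulliMean_add, bernoulliMean_const]
  exact add_le_add le_rfl hprob

end RichTuples

section Frames

variable {V : Type*} {B : Finset V} {L t : ℕ}

lemma rowPattern_cons (M : V → V → ℤ) (x : V) (a : Fin L → V) (y : V) :
    rowPattern M (Fin.cons x a : Fin (L + 1) → V) y = Fin.cons (M x y : ℝ) (rowPattern M a y) := by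
  funext i
  cases i using Fin.cases <;> rfl

lemma exists_linearIndependent_cons_cons {v : Fin L → Fin L → ℝ} (hv : LinearIndependent ℝ v)
    (e : Fin L → ℝ) (w : Fin L → ℝ) :
    ∃ e₀ ∈ ({0, 1} : Set ℝ), LinearIndependent ℝ
      (Fin.cons (Fin.cons e₀ w) fun j ↦ Fin.cons (e j) (v j) : Fin (L + 1) → Fin (L + 1) → ℝ) := by
  set v' : Fin L → Fin (L + 1) → ℝ := fun j ↦ Fin.cons (e j) (v j)
  set tail : (Fin (L + 1) → ℝ) →ₗ[ℝ] Fin L → ℝ := LinearMap.funLeft ℝ ℝ Fin.succ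
  have htail : LinearIndependent ℝ (tail ∘ v') := hv
  simp only [linearIndependent_finCons, htail.of_comp, true_and]
  by_contra! hspan
  set u : Fin (L + 1) → ℝ := Fin.cons 1 w - Fin.cons 0 w
  have hu : u ∈ Submodule.span ℝ (Set.range v') :=
    sub_mem (hspan 1 (by simp)) (hspan 0 (by simp))
  have hker : tail u = 0 := by
    funext i
    simp [tail, u, LinearMap.funLeft_apply]
  have hu₀ : u = 0 := Submodule.disjoint_def.mp (Submodule.range_ker_disjoint htail) u hu hker
  simpa [u] using congrFun hu₀ 0

lemma HasPopularFrame.cons {M : V → V → ℤ} {a : Fin L → V}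
    (ha : HasPopularFrame (rowPattern M a) B L (2 * t)) {x : V}
    (hx : ∀ y, M x y = 0 ∨ M x y = 1) {w : Fin L → ℝ}
    (h₀ : t ≤ #{b ∈ B | rowPattern M a b = w ∧ M x b = 0})
    (h₁ : t ≤ #{b ∈ B | rowPattern M a b = w ∧ M x b = 1}) :
    HasPopularFrame (rowPattern M (Fin.cons x a : Fin (L + 1) → V)) B (L + 1) t := by
  classical
  obtain ⟨v, hv, hpop⟩ := ha
  have hsplit : ∀ j, ∃ e : ℤ, t ≤ #{b ∈ B | rowPattern M a b = v j ∧ M x b = e} := by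
    intro j
    by_contra! hsmall
    have hunion : ({b ∈ B | rowPattern M a b = v j} : Finset V) ⊆
        {b ∈ B | rowPattern M a b = v j ∧ M x b = 0} ∪
          {b ∈ B | rowPattern M a b = v j ∧ M x b = 1} := by
      intro b hb
      rw [mem_filter] at hb
      rcases hx b with h | h <;> simp [hb, h]
    have := (hpop j).trans ((card_le_card hunion).trans (card_union_le _ _))
    have := hsmall 0
    have := hsmall 1
    lia
  choose e he using hsplit
  obtain ⟨e₀, he₀, hind⟩ := exists_linearIndependent_cons_cons hv (fun j ↦ (e j : ℝ)) w
  refine ⟨_, hind, Fin.cases ?_ fun j ↦ ?_⟩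
  · simp only [rowPattern_cons, Fin.cons_zero, Fin.cons_inj]
    obtain rfl | rfl := he₀
    · simpa [and_comm] using h₀
    · simpa [and_comm] using h₁
  · simp only [rowPattern_cons, Fin.cons_succ, Fin.cons_inj]
    simpa [and_comm] using he j

lemma exists_card_le_two_pow_mul_card_filter (G : SimpleGraph V) [DecidableRel G.Adj]
    (B : Finset V) (a : Fin L → V) :
    ∃ w, #B ≤ 2 ^ L * #{b ∈ B | rowPattern (G.adjMatrix ℤ) a b = w} := by
  have hmaps : ∀ b ∈ B, rowPattern (G.adjMatrix ℤ) a b ∈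
      Fintype.piFinset fun _ : Fin L ↦ ({0, 1} : Finset ℝ) := by
    intro b _
    simp only [Fintype.mem_piFinset, rowPattern, SimpleGraph.adjMatrix_apply]
    intro i
    split_ifs <;> simp
  by_contra! hlt
  refine (Finset.sum_lt_sum_of_nonempty (s := Fintype.piFinset fun _ : Fin L ↦ {0, 1})
    ⟨0, by simp⟩ fun w _ ↦ hlt w).ne ?_
  rw [← mul_sum, ← card_eq_sum_card_fiberwise hmaps]
  simp

end Frames

section HomogeneousSets

variable {V : Type*} {G : SimpleGraph V}

/-- `S` contains a clique and an independent set the product of whose sizes is at least `N`. -/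
def HasCliqueIndepSet {V : Type*} (G : SimpleGraph V) (S : Finset V) (N : ℕ) : Prop :=
  ∃ K ⊆ S, ∃ I ⊆ S, G.IsClique K ∧ G.IsIndepSet I ∧ N ≤ #K * #I

lemma hasCliqueIndepSet_compl {S : Finset V} {N : ℕ} :
    HasCliqueIndepSet Gᶜ S N ↔ HasCliqueIndepSet G S N := by
  have hcompl : ∀ H : SimpleGraph V, HasCliqueIndepSet H S N → HasCliqueIndepSet Hᶜ S N := by
    rintro H ⟨K, hK, I, hI, hKc, hIi, hN⟩
    exact ⟨I, hI, K, hK, H.isClique_compl.mpr hIi, H.isIndepSet_compl.mpr hKc, mul_comm #K _ ▸ hN⟩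
  exact ⟨fun h ↦ compl_compl G ▸ hcompl _ h, hcompl G⟩

lemma card_le_card_filter_forall_add_mul {T B : Finset V} {P : V → V → Prop}
    [∀ x, DecidablePred (P x)] {s : ℕ} (h : ∀ x ∈ T, #{b ∈ B | P x b} ≤ s) :
    #B ≤ #{b ∈ B | ∀ x ∈ T, ¬ P x b} + #T * s := by
  classical
  refine (card_filter_add_card_filter_not fun b ↦ ∀ x ∈ T, ¬ P x b).ge.trans ?_
  gcongr
  refine (card_le_card (t := T.biUnion fun x ↦ {b ∈ B | P x b}) fun b hb ↦ ?_).trans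
    (card_biUnion_le_card_mul _ _ _ h)
  grind

/-- `l` bounds the size of every clique and of every independent set of `G`. -/
def HomogeneousSetsBounded {V : Type*} (G : SimpleGraph V) (l : ℕ) : Prop :=
  ∀ K : Finset V, G.IsClique K ∨ G.IsIndepSet K → #K ≤ l

lemma HomogeneousSetsBounded.compl {l : ℕ} (hl : HomogeneousSetsBounded G l) :
    HomogeneousSetsBounded Gᶜ l := fun K hK ↦
  hl K (hK.symm.imp G.isIndepSet_compl.mp G.isClique_compl.mp)

lemma isIndepSet_union [DecidableEq V] {I J : Finset V} (hI : G.IsIndepSet I) (hJ : G.IsIndepSet J)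
    (h : ∀ x ∈ I, ∀ y ∈ J, ¬ G.Adj x y) : G.IsIndepSet (I ∪ J : Finset V) := by
  rw [coe_union]
  refine Set.pairwise_union.mpr ⟨hI, hJ, fun x hx y hy _ ↦ ⟨h x hx y hy, fun hyx ↦ ?_⟩⟩
  exact h x hx y hy hyx.symm

end HomogeneousSets

section HomogeneousPairs

variable {V : Type*} [DecidableEq V] (G : SimpleGraph V) [DecidableRel G.Adj]

/-- Every vertex of `A` has at most `s` neighbours in `B`. -/
def IsSparsePair {V : Type*} (G : SimpleGraph V) [DecidableRel G.Adj] (A B : Finset V) (s : ℕ) :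
    Prop :=
  ∀ a ∈ A, #{b ∈ B | G.Adj a b} ≤ s

/-- Up to factors `c` and `d`, the pair `(A, B)` contains a pair that is sparse in `G` or in its
complement. -/
def HasHomogeneousSubpair (A B : Finset V) (c d s : ℕ) : Prop :=
  ∃ A' ⊆ A, ∃ B' ⊆ B, #A ≤ c * #A' ∧ #B ≤ d * #B' ∧
    (IsSparsePair G A' B' s ∨ IsSparsePair Gᶜ A' B' s)

variable {G}

lemma exists_isSparsePair_or_compl {A B : Finset V} {s : ℕ}
    (h : ∀ x ∈ A, #{b ∈ B | G.Adj x b} ≤ s ∨ #{b ∈ B | ¬ G.Adj x b} ≤ s) :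
    ∃ A' ⊆ A, #A ≤ 2 * #A' ∧ (IsSparsePair G A' B s ∨ IsSparsePair Gᶜ A' B s) := by
  set A₁ : Finset V := {x ∈ A | #{b ∈ B | G.Adj x b} ≤ s}
  set A₂ : Finset V := {x ∈ A | ¬ #{b ∈ B | G.Adj x b} ≤ s}
  have hA : #A₁ + #A₂ = #A := card_filter_add_card_filter_not _
  have hsparse : IsSparsePair G A₁ B s := fun x hx ↦ (mem_filter.mp hx).2
  have hdense : IsSparsePair Gᶜ A₂ B s := by
    intro x hx
    obtain ⟨hxA, hx⟩ := mem_filter.mp hx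
    refine (card_le_card (monotone_filter_right B fun b _ hb ↦ ?_)).trans
      ((h x hxA).resolve_left hx)
    exact ((G.compl_adj x b).mp hb).2
  obtain hle | hle := le_total #A₁ #A₂
  · exact ⟨A₂, filter_subset _ _, by lia, .inr hdense⟩
  · exact ⟨A₁, filter_subset _ _, by lia, .inl hsparse⟩

variable (G) in
lemma exists_hasPopularFrame_or_hasHomogeneousSubpair (A B : Finset V) (L t : ℕ) :
    (∃ a : Fin L → V, (∀ i, a i ∈ A) ∧ HasPopularFrame (rowPattern (G.adjMatrix ℤ) a) B L t) ∨
      HasHomogeneousSubpair G A B 2 (2 ^ L) (2 ^ L * t) := by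
  induction L generalizing t with
  | zero =>
    exact .inl ⟨finZeroElim, finZeroElim, finZeroElim, linearIndependent_empty_type, finZeroElim⟩
  | succ L ih =>
    obtain ⟨a, haA, ha⟩ | ⟨A', hA', B', hB', hA, hB, hsparse⟩ := ih (2 * t)
    · obtain ⟨w, hw⟩ := exists_card_le_two_pow_mul_card_filter G B a
      set B' : Finset V := {b ∈ B | rowPattern (G.adjMatrix ℤ) a b = w}
      by_cases hx : ∃ x ∈ A, t ≤ #{b ∈ B' | G.Adj x b} ∧ t ≤ #{b ∈ B' | ¬ G.Adj x b}
      · obtain ⟨x, hxA, h₁, h₀⟩ := hx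
        refine .inl ⟨Fin.cons x a, Fin.cases hxA haA, ha.cons (x := x) (w := w)
          ((G.isAdjMatrix_adjMatrix ℤ).zero_or_one x) ?_ ?_⟩
        · simpa [B', filter_filter, SimpleGraph.adjMatrix_apply] using h₀
        · simpa [B', filter_filter, SimpleGraph.adjMatrix_apply] using h₁
      · push Not at hx
        have hlarge : 2 * t ≤ 2 ^ (L + 1) * t := by
          rw [pow_succ]
          nlinarith [Nat.one_le_two_pow (n := L)]
        obtain ⟨A', hA', hA, hsparse⟩ :=
          exists_isSparsePair_or_compl (G := G) (A := A) (B := B') (s := 2 ^ (L + 1) * t)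
            fun x hxA ↦ by have := hx x hxA; lia
        refine .inr ⟨A', hA', B', filter_subset _ _, hA, hw.trans ?_, hsparse⟩
        exact Nat.mul_le_mul_right _ (Nat.pow_le_pow_right two_pos (Nat.le_succ L))
    · refine .inr ⟨A', hA', B', hB', hA, hB.trans ?_, ?_⟩
      · exact Nat.mul_le_mul_right _ (Nat.pow_le_pow_right two_pos (Nat.le_succ L))
      · rwa [pow_succ, mul_assoc]

lemma HasCliqueIndepSet.union {A B : Finset V} {N l s : ℕ} (hA : HasCliqueIndepSet G A N)
    (hAB : Disjoint A B) (hl : HomogeneousSetsBounded G l) (hs : IsSparsePair G A B s)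
    (hB : ∀ B' ⊆ B, #B ≤ #B' + 2 * l * s → HasCliqueIndepSet G B' N) :
    HasCliqueIndepSet G (A ∪ B) (2 * N) := by
  obtain ⟨K, hKA, I, hIA, hK, hI, hKI⟩ := hA
  have hT : #(K ∪ I) ≤ 2 * l := by
    linarith [card_union_le K I, hl K (.inl hK), hl I (.inr hI)]
  set B' : Finset V := {b ∈ B | ∀ x ∈ K ∪ I, ¬ G.Adj x b}
  obtain ⟨K', hKB, I', hIB, hK', hI', hKI'⟩ := hB B' (filter_subset _ _) <|
    (card_le_card_filter_forall_add_mul fun x hx ↦ hs x (union_subset hKA hIA hx)).trans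
      (Nat.add_le_add_left (Nat.mul_le_mul_right s hT) _)
  have hB' : B' ⊆ B := filter_subset _ _
  have hunion : G.IsIndepSet (I ∪ I' : Finset V) := isIndepSet_union hI hI' fun x hx y hy ↦
    (mem_filter.mp (hIB hy)).2 x (mem_union_right _ hx)
  have hcard : #(I ∪ I') = #I + #I' := card_union_of_disjoint
    (disjoint_of_subset_left hIA (disjoint_of_subset_right (hIB.trans hB') hAB))
  have hsub : I ∪ I' ⊆ A ∪ B := union_subset_union hIA (hIB.trans hB')
  obtain hle | hle := le_total #K #K'
  · refine ⟨K', (hKB.trans hB').trans subset_union_right, _, hsub, hK', hunion, ?_⟩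
    rw [hcard]
    nlinarith [Nat.mul_le_mul_right #I hle]
  · refine ⟨K, hKA.trans subset_union_left, _, hsub, hK, hunion, ?_⟩
    rw [hcard]
    nlinarith [Nat.mul_le_mul_right #I' hle]

lemma HasHomogeneousSubpair.hasCliqueIndepSet_union {A B : Finset V} {d s l R N : ℕ}
    (h : HasHomogeneousSubpair G A B 4 d s) (hAB : Disjoint A B)
    (hl : HomogeneousSetsBounded G l) (ih : ∀ S, R ≤ #S → HasCliqueIndepSet G S N)
    (hA : 4 * R ≤ #A) (hB : d * (R + 2 * l * s) < #B) : HasCliqueIndepSet G (A ∪ B) (2 * N) := by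
  obtain ⟨A', hA', B', hB', hAc, hBc, hs⟩ := h
  have hdisj : Disjoint A' B' := disjoint_of_subset_left hA' (disjoint_of_subset_right hB' hAB)
  have hB'c : R + 2 * l * s < #B' := lt_of_mul_lt_mul_left (hB.trans_le hBc) (Nat.zero_le d)
  obtain ⟨K, hK, I, hI, h⟩ : HasCliqueIndepSet G (A' ∪ B') (2 * N) := by
    obtain hs | hs := hs
    · exact (ih A' (by lia)).union hdisj hl hs fun B'' _ h ↦ ih B'' (by lia)
    · exact hasCliqueIndepSet_compl.mp <| (hasCliqueIndepSet_compl.mpr (ih A' (by lia))).union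
        hdisj hl.compl hs fun B'' _ h ↦ hasCliqueIndepSet_compl.mpr (ih B'' (by lia))
  have hsub : A' ∪ B' ⊆ A ∪ B := union_subset_union hA' hB'
  exact ⟨K, hK.trans hsub, I, hI.trans hsub, h⟩

lemma hasCliqueIndepSet_two_pow {d s l s₀ : ℕ} (hl : HomogeneousSetsBounded G l) (hs₀ : 0 < s₀)
    (hd : 0 < d) (hs : 4 * l * s ≤ s₀)
    (h : ∀ A B : Finset V, Disjoint A B → s₀ ≤ #A → s₀ ≤ #B → HasHomogeneousSubpair G A B 4 d s)
    (D : ℕ) (S : Finset V) (hS : (16 * d) ^ D * s₀ ≤ #S) : HasCliqueIndepSet G S (2 ^ D) := by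
  induction D generalizing S with
  | zero =>
    obtain ⟨x, hx⟩ : S.Nonempty := card_pos.mp (by lia)
    exact ⟨{x}, by simpa using hx, {x}, by simpa using hx, by simp, by simp, by simp⟩
  | succ D ih =>
    set R := (16 * d) ^ D * s₀
    have hR : s₀ ≤ R := Nat.le_mul_of_pos_left _ (by positivity)
    have hdR : R ≤ d * R := Nat.le_mul_of_pos_left _ hd
    have hS' : 16 * (d * R) ≤ #S := by
      refine le_trans (le_of_eq ?_) hS
      rw [pow_succ]
      ring
    obtain ⟨A, hAS, hA⟩ := exists_subset_card_eq (s := S) (n := #S / 2) (by lia)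
    have hB : #(S \ A) = #S - #S / 2 := by rw [card_sdiff_of_subset hAS, hA]
    have hds : d * (2 * l * s) ≤ d * R := Nat.mul_le_mul_left d (by lia)
    have hdouble := (h A (S \ A) disjoint_sdiff (by lia) (by lia)).hasCliqueIndepSet_union
      disjoint_sdiff hl ih (by lia) (by lia)
    rwa [union_sdiff_of_subset hAS, ← pow_succ'] at hdouble

end HomogeneousPairs

section ExistsRichFamily

variable {V : Type*}

lemma exists_isRichFamily {M : V → V → ℤ} {A B : Finset V} {L t m : ℕ} (hm : 2 * (m * L) ≤ #A)
    (h : ∀ A' ⊆ A, #A ≤ 2 * #A' →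
      ∃ a : Fin L → V, (∀ i, a i ∈ A') ∧ HasPopularFrame (rowPattern M a) B L t) :
    ∃ τ : Fin m → Fin L → V, IsRichFamily M A B t τ := by
  classical
  induction m with
  | zero => exact ⟨finZeroElim, finZeroElim, finZeroElim, finZeroElim⟩
  | succ m ih =>
    obtain ⟨τ, hτ⟩ := ih (by lia)
    set W : Finset V := univ.image fun q : Fin m × Fin L ↦ τ q.1 q.2
    have hW : #W ≤ m * L := card_image_le.trans (by simp)
    obtain ⟨a, ha, hpop⟩ := h (A \ W) sdiff_subset <| by
      have := le_card_sdiff W A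
      rw [add_mul, one_mul] at hm
      lia
    have hne : ∀ i s i', a i ≠ τ s i' := fun i s i' heq ↦
      (mem_sdiff.mp (ha i)).2 (heq ▸ mem_image_of_mem (fun q ↦ τ q.1 q.2) (mem_univ (s, i')))
    refine ⟨Fin.cons a τ, Fin.cases (fun i ↦ (mem_sdiff.mp (ha i)).1) hτ.mem,
      Fin.cases hpop hτ.hasPopularFrame, ?_⟩
    intro s s' i i' heq
    cases s using Fin.cases <;> cases s' using Fin.cases
    · rfl
    · exact (hne _ _ _ heq).elim
    · exact (hne _ _ _ heq.symm).elim
    · exact congrArg Fin.succ (hτ.eq_of_eq _ _ _ _ heq)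

variable [Fintype V] {G : SimpleGraph V} [DecidableRel G.Adj]

lemma exists_disjoint_forall_exists_hasPopularFrame {l L t s₀ D : ℕ}
    (hl : HomogeneousSetsBounded G l) (hs₀ : 0 < s₀) (hs : 4 * l * (2 ^ L * t) ≤ s₀)
    (hD : l * l < 2 ^ D) (hV : (16 * 2 ^ L) ^ D * s₀ ≤ Fintype.card V) :
    ∃ A B : Finset V, Disjoint A B ∧ s₀ ≤ #A ∧ ∀ A' ⊆ A, #A ≤ 2 * #A' →
      ∃ a : Fin L → V, (∀ i, a i ∈ A') ∧ HasPopularFrame (rowPattern (G.adjMatrix ℤ) a) B L t := by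
  classical
  by_contra! hpoor
  obtain ⟨K, -, I, -, hK, hI, hKI⟩ : HasCliqueIndepSet G univ (2 ^ D) := by
    refine hasCliqueIndepSet_two_pow hl hs₀ (by positivity) hs (fun A B hAB hA _ ↦ ?_) D univ hV
    obtain ⟨A', hA', hAc, hno⟩ := hpoor A B hAB hA
    obtain ⟨a, ha, hpop⟩ | ⟨A'', hA'', B', hB', hAc', hBc, hsparse⟩ :=
      exists_hasPopularFrame_or_hasHomogeneousSubpair G A' B L t
    · exact (hno a ha hpop).elim
    · exact ⟨A'', hA''.trans hA', B', hB', by lia, hBc, hsparse⟩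
  exact (hKI.trans (Nat.mul_le_mul (hl K (.inl hK)) (hl I (.inr hI)))).not_gt hD

theorem exists_disjoint_isRichFamily {l L t : ℕ} (hl : HomogeneousSetsBounded G l) (hl₀ : 0 < l)
    (ht : 0 < t) (hV : (4 * l ^ 2) ^ (2 * L + 5) * t ≤ Fintype.card V) :
    ∃ A B : Finset V, Disjoint A B ∧
      ∃ τ : Fin t → Fin L → V, IsRichFamily (G.adjMatrix ℤ) A B t τ := by
  set s₀ := 4 * l * (2 ^ L * t)
  set D := 2 * (Nat.log 2 l + 1)
  have hD : l * l < 2 ^ D := by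
    have := Nat.lt_pow_succ_log_self one_lt_two l
    rw [pow_mul', sq]
    exact Nat.mul_self_lt_mul_self this
  have hD' : 2 ^ D ≤ 4 * l ^ 2 := by
    have := Nat.pow_le_pow_left (Nat.pow_log_le_self 2 hl₀.ne') 2
    calc 2 ^ D = 4 * (2 ^ Nat.log 2 l) ^ 2 := by rw [pow_mul', pow_succ]; ring
      _ ≤ 4 * l ^ 2 := by lia
  have hfactor : 2 ^ L * 4 * l ≤ (4 * l ^ 2) ^ (L + 1) := by
    have hl' : 1 ≤ l ^ 2 := Nat.one_le_pow _ _ hl₀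
    rw [pow_succ, mul_assoc]
    gcongr <;> nlinarith
  have hcard : (16 * 2 ^ L) ^ D * s₀ ≤ Fintype.card V := by
    refine le_trans ?_ hV
    calc (16 * 2 ^ L) ^ D * s₀ = (2 ^ (L + 4)) ^ D * s₀ := by ring
      _ = (2 ^ D) ^ (L + 4) * (2 ^ L * 4 * l) * t := by rw [pow_right_comm]; ring
      _ ≤ (4 * l ^ 2) ^ (L + 4) * (4 * l ^ 2) ^ (L + 1) * t := by gcongr
      _ = (4 * l ^ 2) ^ (2 * L + 5) * t := by rw [← pow_add]; congr 2; ring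
  obtain ⟨A, B, hAB, hA, h⟩ :=
    exists_disjoint_forall_exists_hasPopularFrame hl (by positivity) le_rfl hD hcard
  refine ⟨A, B, hAB, exists_isRichFamily (le_trans ?_ hA) h⟩
  calc 2 * (t * L) ≤ 2 * (t * 2 ^ L) := by gcongr; exact Nat.lt_two_pow_self.le
    _ ≤ 4 * l * (t * 2 ^ L) := by gcongr; lia
    _ = s₀ := by rw [mul_comm t]

end ExistsRichFamily

section NearSetStructure

variable {θ ε : ℝ} {Z H w : ℕ}

lemma exists_lt_card_filter_Ico {s : Finset ℤ} (hH : 0 < H) (hs : s ⊆ Icc (-(Z : ℤ)) Z)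
    (hw : (2 * Z / H + 1) * w < #s) : ∃ z₀ ∈ s, w < #{z ∈ s | z ∈ Set.Ico z₀ (z₀ + H)} := by
  have hmaps : ∀ z ∈ s, (z + Z).toNat / H ∈ range (2 * Z / H + 1) := by
    intro z hz
    have := mem_Icc.mp (hs hz)
    exact mem_range_succ_iff.mpr (Nat.div_le_div_right (by lia))
  obtain ⟨y, -, hy⟩ := exists_lt_card_fiber_of_mul_lt_card_of_maps_to hmaps (by simpa using hw)
  set F : Finset ℤ := {z ∈ s | (z + Z).toNat / H = y}
  have hF : F.Nonempty := card_pos.mp (by lia)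
  obtain ⟨hz₀, hy₀⟩ := mem_filter.mp (F.min'_mem hF)
  refine ⟨F.min' hF, hz₀, hy.trans_le (card_le_card fun z hz ↦ ?_)⟩
  obtain ⟨hzs, hzy⟩ := mem_filter.mp hz
  refine mem_filter.mpr ⟨hzs, F.min'_le z hz, ?_⟩
  rw [Nat.div_eq_iff hH] at hy₀ hzy
  have := mem_Icc.mp (hs hz₀)
  have := mem_Icc.mp (hs hzs)
  lia

lemma exists_mul_le_sub_of_forall_dvd_sub {F : Finset ℤ} {z₀ : ℤ} {q : ℕ} (hq : 0 < q)
    (hF : ∀ z ∈ F, z₀ ≤ z ∧ (q : ℤ) ∣ z - z₀) (hw : w < #F) : ∃ z ∈ F, (q * w : ℤ) ≤ z - z₀ := by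
  by_contra! hlt
  refine (card_le_card (t := (range w).image fun i : ℕ ↦ z₀ + q * i) fun z hz ↦ ?_).not_gt
    (card_image_le.trans_lt (by simpa using hw))
  obtain ⟨hle, k, hk⟩ := hF z hz
  have hq' : (0 : ℤ) < q := by exact_mod_cast hq
  have hk₀ : 0 ≤ k := nonneg_of_mul_nonneg_right (hk ▸ sub_nonneg.mpr hle) hq'
  have hkw : k < w := lt_of_mul_lt_mul_left (hk ▸ hlt z hz) hq'.le
  exact mem_image.mpr ⟨k.toNat, mem_range.mpr (by lia), by rw [Int.toNat_of_nonneg hk₀]; lia⟩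

lemma den_dvd_and_abs_mul_le_of_norm_le (hεH : 16 * ε * H ≤ 1) {r : ℚ} (hden : r.den ≤ 4 * H)
    (hr : |θ - r| ≤ 1 / ((4 * H + 1) * r.den)) {d : ℤ} (hd : |d| ≤ H)
    (hθ : ‖((θ * d : ℝ) : UnitAddCircle)‖ ≤ 2 * ε) :
    (r.den : ℤ) ∣ d ∧ |(θ - r) * d| ≤ 2 * ε := by
  rw [UnitAddCircle.norm_eq] at hθ
  set m : ℤ := round (θ * d)
  have hq : (0 : ℝ) < r.den := by exact_mod_cast r.den_pos
  have hnum : (r * r.den : ℝ) = r.num := by exact_mod_cast Rat.mul_den_eq_num r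
  have hd' : |(d : ℝ)| ≤ H := by exact_mod_cast hd
  have happrox : |(θ - r) * r.den * d| ≤ 1 / 4 := by
    have hr' : |θ - r| * r.den ≤ 1 / (4 * H + 1) := by
      rwa [← le_div_iff₀ hq, div_div]
    rw [abs_mul, abs_mul, Nat.abs_cast]
    refine (mul_le_mul hr' hd' (abs_nonneg _) (by positivity)).trans ?_
    rw [one_div_mul_eq_div, div_le_div_iff₀ (by positivity) (by positivity)]
    linarith
  have hclose : |(θ * d - m) * r.den| ≤ 1 / 2 := by
    have hden' : (r.den : ℝ) ≤ 4 * H := by exact_mod_cast hden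
    rw [abs_mul, Nat.abs_cast]
    nlinarith [mul_le_mul hθ hden' hq.le ((abs_nonneg _).trans hθ)]
  have hzero : d * r.num - m * r.den = 0 := by
    have hlt : |((d * r.num - m * r.den : ℤ) : ℝ)| < 1 := by
      push_cast
      rw [← hnum, show d * (r * r.den) - m * r.den =
        (θ * d - m) * r.den - (θ - r) * r.den * d by ring]
      linarith [abs_sub ((θ * d - m) * r.den) ((θ - r) * r.den * d)]
    exact Int.abs_lt_one_iff.mp (by exact_mod_cast hlt)
  constructor
  · exact r.isCoprime_num_den.symm.dvd_of_dvd_mul_right ⟨m, by linarith⟩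
  · have hm : (m : ℝ) = r * d := by
      have hzero' : (d * r.num - m * r.den : ℝ) = 0 := by exact_mod_cast hzero
      refine mul_right_cancel₀ hq.ne' ?_
      linear_combination -hzero' - d * hnum
    rwa [sub_mul, ← hm]

lemma exists_rat_of_lt_card_nearSet (hH : 0 < H) (hw₀ : 0 < w) (hεH : 16 * ε * H ≤ 1)
    (hw : (2 * Z / H + 1) * w < #(nearSet θ ε Z)) :
    ∃ r : ℚ, r.den ≤ H / w ∧ |θ - r| ≤ 2 * ε / w := by
  obtain ⟨z₀, hz₀, hcard⟩ := exists_lt_card_filter_Ico hH (filter_subset _ _) hw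
  obtain ⟨r, hr, hden⟩ := Real.exists_rat_abs_sub_le_and_den_le θ (n := 4 * H) (by lia)
  push_cast at hr
  have hwindow : ∀ z ∈ ({z ∈ nearSet θ ε Z | z ∈ Set.Ico z₀ (z₀ + H)} : Finset ℤ),
      (z₀ ≤ z ∧ z < z₀ + H) ∧ (r.den : ℤ) ∣ z - z₀ ∧ |(θ - r) * (z - z₀ : ℤ)| ≤ 2 * ε := by
    intro z hz
    obtain ⟨hz, hIco⟩ := mem_filter.mp hz
    refine ⟨hIco, den_dvd_and_abs_mul_le_of_norm_le hεH hden hr ?_ ?_⟩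
    · exact abs_le.mpr ⟨by linarith [hIco.1], by linarith [hIco.2]⟩
    · rw [Int.cast_sub, mul_sub, AddCircle.coe_sub]
      linarith [norm_sub_le ((θ * z : ℝ) : UnitAddCircle) (θ * z₀ : ℝ), (mem_filter.mp hz).2,
        (mem_filter.mp hz₀).2]
  obtain ⟨z, hz, hlarge⟩ := exists_mul_le_sub_of_forall_dvd_sub r.den_pos
    (fun z hz ↦ ⟨(hwindow z hz).1.1, (hwindow z hz).2.1⟩) hcard
  obtain ⟨⟨-, hlt⟩, -, hθ⟩ := hwindow z hz
  refine ⟨r, ?_, ?_⟩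
  · rw [Nat.le_div_iff_mul_le hw₀]
    zify
    linarith
  · have hwz : (w : ℝ) ≤ (z - z₀ : ℤ) := by
      have : (1 : ℤ) ≤ r.den := by exact_mod_cast r.den_pos
      exact_mod_cast (by nlinarith : (w : ℤ) ≤ z - z₀)
    rw [abs_mul, abs_of_nonneg ((Nat.cast_nonneg w).trans hwz)] at hθ
    rw [le_div_iff₀ (by exact_mod_cast hw₀)]
    exact (mul_le_mul_of_nonneg_left hwz (abs_nonneg _)).trans hθ

lemma card_le_of_forall_exists_rat {N : ℕ} (hN : 0 < N) {κ : ℝ} (hκ : κ ∈ Set.Icc 0 1) {Q : ℕ}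
    {T : Finset ℕ} (hT : ∀ t ∈ T, t < N ∧ ∃ r : ℚ, r.den ≤ Q ∧ |(t / N : ℝ) - r| ≤ κ) :
    (#T : ℝ) ≤ 4 * Q ^ 2 * (2 * κ * N + 1) := by
  set R : Finset (ℕ × ℤ) := Icc 1 Q ×ˢ Icc (-(Q : ℤ)) (2 * Q)
  have hR : #R ≤ 4 * Q ^ 2 := by
    have : (2 * (Q : ℤ) + 1 - -(Q : ℤ)).toNat = 3 * Q + 1 := by lia
    rw [card_product, Nat.card_Icc, Int.card_Icc, this]
    rcases Q with _ | Q <;> [simp; (rw [Nat.add_sub_cancel]; nlinarith)]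
  have hcover : T ⊆ R.biUnion fun qa ↦ {t ∈ range N | |((t : ℕ) : ℝ) / N - qa.2 / qa.1| ≤ κ} := by
    intro t ht
    obtain ⟨htN, r, hrQ, hr⟩ := hT t ht
    have hcast : (r : ℝ) = r.num / r.den := by exact_mod_cast (Rat.num_div_den r).symm
    have hq : (0 : ℝ) < r.den := by exact_mod_cast r.den_pos
    have ht₁ : (t / N : ℝ) ≤ 1 :=
      div_le_one_of_le₀ (by exact_mod_cast htN.le) (Nat.cast_nonneg N)
    have ht₀ : 0 ≤ (t / N : ℝ) := by positivity
    obtain ⟨hlow, hupp⟩ := abs_le.mp hr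
    rw [hcast] at hlow hupp
    have hnum₀ : -(r.den : ℝ) ≤ r.num := by
      rw [← neg_one_mul, ← le_div_iff₀ hq]
      linarith [hκ.2]
    have hnum₁ : (r.num : ℝ) ≤ 2 * r.den := by
      rw [← div_le_iff₀ hq]
      linarith [hκ.2]
    have hnum₀' : -(r.den : ℤ) ≤ r.num := by exact_mod_cast hnum₀
    have hnum₁' : r.num ≤ 2 * (r.den : ℤ) := by exact_mod_cast hnum₁
    refine mem_biUnion.mpr ⟨(r.den, r.num), mem_product.mpr ⟨mem_Icc.mpr ⟨r.den_pos, hrQ⟩,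
      mem_Icc.mpr ⟨by dsimp only; lia, by dsimp only; lia⟩⟩, ?_⟩
    exact mem_filter.mpr ⟨mem_range.mpr htN, hcast ▸ hr⟩
  calc (#T : ℝ) ≤ ∑ qa ∈ R, (#{t ∈ range N | |((t : ℕ) : ℝ) / N - qa.2 / qa.1| ≤ κ} : ℝ) := by
        exact_mod_cast (card_le_card hcover).trans card_biUnion_le
    _ ≤ #R * (2 * κ * N + 1) := by
        rw [← nsmul_eq_mul]
        exact sum_le_card_nsmul _ _ _ fun qa _ ↦ card_filter_abs_div_sub_le hN _ hκ.1
    _ ≤ 4 * Q ^ 2 * (2 * κ * N + 1) := by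
        have := hκ.1
        gcongr
        exact_mod_cast hR

lemma card_filter_lt_card_nearSet_le {N : ℕ} (hN : 0 < N) (hH : 0 < H) (hw : 0 < w) (hε : 0 ≤ ε)
    (hεH : 16 * ε * H ≤ 1) :
    (#{t ∈ range N | (2 * Z / H + 1) * w < #(nearSet (((t : ℕ) : ℝ) / N) ε Z)} : ℝ) ≤
      4 * (H / w : ℕ) ^ 2 * (2 * (2 * ε / w) * N + 1) := by
  have hw' : (1 : ℝ) ≤ w := by exact_mod_cast hw
  have hH' : (1 : ℝ) ≤ H := by exact_mod_cast hH
  refine card_le_of_forall_exists_rat hN ⟨by positivity, ?_⟩ fun t ht ↦ ?_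
  · rw [div_le_one (by linarith)]
    nlinarith
  · obtain ⟨htN, ht⟩ := mem_filter.mp ht
    exact ⟨mem_range.mp htN, exists_rat_of_lt_card_nearSet hH hw hεH ht⟩

end NearSetStructure

section UniformSlice

lemma factorial_mul_pow_le_factorial_mul_pow (k j : ℕ) :
    k.factorial * k ^ j ≤ j.factorial * k ^ k := by
  rcases le_total j k with hjk | hkj
  · calc k.factorial * k ^ j = j.factorial * k.descFactorial (k - j) * k ^ j := by
          rw [← Nat.factorial_mul_descFactorial (Nat.sub_le k j), Nat.sub_sub_self hjk]
      _ ≤ j.factorial * k ^ (k - j) * k ^ j := by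
          gcongr
          exact Nat.descFactorial_le_pow k (k - j)
      _ = j.factorial * k ^ k := by rw [mul_assoc, ← pow_add, Nat.sub_add_cancel hjk]
  · calc k.factorial * k ^ j = k.factorial * k ^ (j - k) * k ^ k := by
          rw [mul_assoc, ← pow_add, Nat.sub_add_cancel hkj]
      _ ≤ j.factorial * k ^ k := by
          gcongr
          exact Nat.factorial_mul_pow_sub_le_factorial hkj

lemma choose_mul_pow_mul_pow_le {n k j : ℕ} (hk : k ≤ n) (hj : j ≤ n) :
    k ^ j * (n - k) ^ (n - j) * n.choose j ≤ k ^ k * (n - k) ^ (n - k) * n.choose k := by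
  have hmul := Nat.mul_le_mul (factorial_mul_pow_le_factorial_mul_pow k j)
    (factorial_mul_pow_le_factorial_mul_pow (n - k) (n - j))
  have hchoose := (Nat.choose_mul_factorial_mul_factorial hj).trans
    (Nat.choose_mul_factorial_mul_factorial hk).symm
  have hpos : 0 < k.factorial * (n - k).factorial * (j.factorial * (n - j).factorial) := by
    positivity
  refine le_of_mul_le_mul_right ?_ hpos
  calc k ^ j * (n - k) ^ (n - j) * n.choose j *
        (k.factorial * (n - k).factorial * (j.factorial * (n - j).factorial))
      = k.factorial * k ^ j * ((n - k).factorial * (n - k) ^ (n - j)) *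
        (n.choose j * j.factorial * (n - j).factorial) := by ring
    _ ≤ j.factorial * k ^ k * ((n - j).factorial * (n - k) ^ (n - k)) *
        (n.choose j * j.factorial * (n - j).factorial) := by gcongr
    _ = k ^ k * (n - k) ^ (n - k) * n.choose k *
        (k.factorial * (n - k).factorial * (j.factorial * (n - j).factorial)) := by
        rw [hchoose]
        ring

lemma pow_self_le_succ_mul_choose_mul {n k : ℕ} (hk : k ≤ n) :
    n ^ n ≤ (n + 1) * (k ^ k * (n - k) ^ (n - k) * n.choose k) := by
  calc n ^ n = (k + (n - k)) ^ n := by rw [Nat.add_sub_cancel' hk]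
    _ = ∑ j ∈ range (n + 1), k ^ j * (n - k) ^ (n - j) * n.choose j := add_pow k (n - k) n
    _ ≤ #(range (n + 1)) • (k ^ k * (n - k) ^ (n - k) * n.choose k) :=
        sum_le_card_nsmul _ _ _ fun j hj ↦
          choose_mul_pow_mul_pow_le hk (mem_range_succ_iff.mp hj)
    _ = (n + 1) * (k ^ k * (n - k) ^ (n - k) * n.choose k) := by rw [card_range, smul_eq_mul]

variable {V : Type*} {S : Finset V} {k : ℕ}

lemma bernoulliProb_card_eq_and (p : ℝ) (S : Finset V) (k : ℕ) (P : Finset V → Prop)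
    [DecidablePred P] :
    bernoulliProb p S (fun U ↦ #U = k ∧ P U) =
      p ^ k * (1 - p) ^ (#S - k) * #{U ∈ S.powersetCard k | P U} := by
  rw [powersetCard_eq_filter, filter_filter, card_filter, Nat.cast_sum, mul_sum]
  refine sum_congr rfl fun U _ ↦ ?_
  by_cases hU : #U = k ∧ P U
  · simp [hU]
  · simp [hU]

lemma bernoulliProb_card_eq (p : ℝ) (S : Finset V) (k : ℕ) :
    bernoulliProb p S (#· = k) = p ^ k * (1 - p) ^ (#S - k) * (#S).choose k := by
  simpa using bernoulliProb_card_eq_and p S k fun _ ↦ True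

lemma one_le_succ_mul_bernoulliProb_card_eq (hk : k ≤ #S) :
    1 ≤ (#S + 1) * bernoulliProb (k / #S : ℝ) S (#· = k) := by
  rw [bernoulliProb_card_eq]
  rcases (#S).eq_zero_or_pos with hS | hS
  · simp [hS, Nat.le_zero.mp (hS ▸ hk)]
  · have hS' : (0 : ℝ) < #S := by exact_mod_cast hS
    have hmode : (#S ^ #S : ℝ) ≤
        (#S + 1) * (k ^ k * (#S - k) ^ (#S - k) * (#S).choose k) := by
      rw [← Nat.cast_sub hk]
      exact_mod_cast pow_self_le_succ_mul_choose_mul hk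
    rw [one_sub_div hS'.ne', div_pow, div_pow, div_mul_div_comm, ← pow_add,
      Nat.add_sub_cancel' hk, div_mul_eq_mul_div, mul_div_assoc', one_le_div (by positivity)]
    exact hmode

lemma card_filter_powersetCard_div_choose {p : ℝ} (hp : p ∈ Set.Ioo 0 1)
    (P : Finset V → Prop) [DecidablePred P] :
    (#{U ∈ S.powersetCard k | P U} / (#S).choose k : ℝ) =
      bernoulliProb p S (fun U ↦ #U = k ∧ P U) / bernoulliProb p S (#· = k) := by
  have hweight : p ^ k * (1 - p) ^ (#S - k) ≠ 0 :=
    mul_ne_zero (pow_ne_zero _ hp.1.ne') (pow_ne_zero _ (sub_pos.mpr hp.2).ne')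
  rw [bernoulliProb_card_eq_and, bernoulliProb_card_eq, mul_div_mul_left _ _ hweight]

end UniformSlice

section CharFunSlice

variable {V : Type*} {p : ℝ} {A B S : Finset V}

lemma norm_sq_bernoulliMean_fourierChar_le [DecidableEq V] (hp : p ∈ Set.Icc 0 1)
    (hAB : Disjoint A B) (hS : A ∪ B ⊆ S) {F : Finset V → ℝ} {φ : V → Finset V → ℝ}
    (hF : ∀ U W, Disjoint U W → F (U ∪ W) = F U + F W + ∑ x ∈ U, φ x W) :
    ‖bernoulliMean p S fun U ↦ (𝐞 (F U) : ℂ)‖ ^ 2 ≤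
      bernoulliMean p B fun b ↦ bernoulliMean p B fun b' ↦
        ∏ x ∈ A, ‖(p * 𝐞 (φ x b - φ x b') + (1 - p) : ℂ)‖ := by
  set T := S \ (A ∪ B)
  have hTAB : Disjoint T (A ∪ B) := sdiff_disjoint
  have hfactor : ∀ R ⊆ T, ∀ a ⊆ A, ∀ b ⊆ B, (𝐞 (F (R ∪ (a ∪ b))) : ℂ) =
      𝐞 (F (R ∪ a)) * (𝐞 (F b + ∑ x ∈ R, φ x b) * 𝐞 (∑ x ∈ a, φ x b)) := by
    intro R hR a ha b hb
    have hRab : Disjoint R (a ∪ b) := hTAB.mono hR (union_subset_union ha hb)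
    have hab : Disjoint a b := hAB.mono ha hb
    have hRa : Disjoint R a := hRab.mono_right subset_union_left
    have hRb : Disjoint R b := hRab.mono_right subset_union_right
    rw [← union_assoc, hF _ _ (disjoint_union_left.mpr ⟨hRb, hab⟩), sum_union hRa,
      ← Circle.coe_mul, ← Circle.coe_mul, ← AddChar.map_add_eq_mul, ← AddChar.map_add_eq_mul]
    congr 2
    ring
  rw [← sdiff_union_of_subset hS, bernoulliMean_union p hTAB]
  refine (pow_le_pow_left₀ (norm_nonneg _) (norm_bernoulliMean_le hp _ _) 2).trans ?_
  refine (sq_bernoulliMean_le hp _ _).trans (bernoulliMean_le_of_forall_le hp fun R hR ↦ ?_)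
  rw [bernoulliMean_union p hAB, bernoulliMean_congr fun a ha ↦
    bernoulliMean_congr fun b hb ↦ hfactor R hR a ha b hb]
  exact norm_sq_bernoulliMean_bernoulliMean_le hp A B (fun _ ↦ (Circle.norm_coe _).le)
    (fun _ ↦ (Circle.norm_coe _).le) φ

lemma card_filter_powersetCard_eq_div_choose_le {X : Finset V → ℤ} {k N : ℕ} (hk : 0 < k)
    (hkS : k < #S) (hN : 0 < N) {bad : Finset ℕ} {β : ℝ} (hβ₀ : 0 ≤ β)
    (hβ : ∀ t ∈ range N, t ∉ bad → ∀ ψ : ℝ,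
      ‖bernoulliMean (k / #S : ℝ) S fun U ↦ (𝐞 (t / N * X U + ψ * #U) : ℂ)‖ ≤ β) (x : ℤ) :
    (#{U ∈ S.powersetCard k | X U = x} / (#S).choose k : ℝ) ≤ #bad / N + (#S + 1) * β := by
  have hS : (0 : ℝ) < #S := by exact_mod_cast hk.trans hkS
  have hp : (k / #S : ℝ) ∈ Set.Ioo 0 1 :=
    ⟨div_pos (by exact_mod_cast hk) hS, (div_lt_one hS).mpr (by exact_mod_cast hkS)⟩
  have hp' := Set.Ioo_subset_Icc_self hp
  have hslice : ∀ t ∈ range N, t ∉ bad → ‖bernoulliMean (k / #S : ℝ) S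
      ({U | #U = k}.indicator fun U ↦ (𝐞 (t / N * X U) : ℂ))‖ ≤ β := by
    intro t ht hbad
    have hcard : ∀ U ⊆ S, |(#U - k : ℤ)| < (#S + 1 : ℕ) := by
      intro U hU
      have := card_le_card hU
      rw [abs_lt]
      lia
    have hmain := norm_bernoulliMean_indicator_eq_le (Y := fun U ↦ (#U : ℤ)) (y := k) hcard
      (f := fun U ↦ (𝐞 (t / N * X U) : ℂ)) (β := β) (p := k / #S) fun ψ ↦ by
        simpa only [AddChar.map_add_eq_mul, Circle.coe_mul, Int.cast_natCast] using hβ t ht hbad ψ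
    simpa only [Nat.cast_inj] using hmain
  have hpoint := bernoulliProb_eq_and_le hp' hN hβ₀ hslice x
  simp only [and_comm (b := #_ = k)] at hpoint
  set q := bernoulliProb (k / #S : ℝ) S (#· = k)
  have hq : 1 ≤ (#S + 1) * q := one_le_succ_mul_bernoulliProb_card_eq hkS.le
  have hq₀ : 0 < q := pos_of_mul_pos_right (zero_lt_one.trans_le hq) (by positivity)
  rw [card_filter_powersetCard_div_choose hp, div_le_iff₀ hq₀]
  linarith [mul_le_mul_of_nonneg_left hq hβ₀]

end CharFunSlice

section Parameters

variable {u h : ℝ}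

lemma div_two_mul_le_floor_div {a : ℝ} (ha : 0 < a) (hah : a ≤ h) : h / (2 * a) ≤ ⌊h / a⌋₊ := by
  rw [mul_comm, ← div_div]
  exact (Nat.div_two_lt_floor ((one_le_div ha).mpr hah)).le

lemma sixteen_mul_sq_le_pow_eight (hu : 2 ≤ u) : 16 * u ^ 2 ≤ u ^ 8 := by
  calc 16 * u ^ 2 ≤ 2 ^ 6 * u ^ 2 := by gcongr; norm_num
    _ ≤ u ^ 6 * u ^ 2 := by gcongr
    _ = u ^ 8 := by ring

lemma two_mul_ceil_div_floor_add_one_mul_floor_le (hu : 129 ≤ u) (huh : u ^ 8 ≤ h) :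
    ((2 * ⌈h * u⌉₊ / ⌊h / (16 * u ^ 2)⌋₊ + 1) * ⌊h / u ^ 8⌋₊ : ℕ) ≤ h / u ^ 4 := by
  have hu₀ : 0 < u := by linarith
  have hh : 0 < h := (pow_pos hu₀ 8).trans_le huh
  have hH : h / (32 * u ^ 2) ≤ ⌊h / (16 * u ^ 2)⌋₊ := by
    exact (div_two_mul_le_floor_div (by positivity)
      ((sixteen_mul_sq_le_pow_eight (by linarith)).trans huh)).trans_eq' (by ring)
  have hZ : (⌈h * u⌉₊ : ℝ) ≤ 2 * (h * u) :=
    Nat.ceil_le_two_mul (by nlinarith [le_self_pow₀ (by linarith : 1 ≤ u) (by norm_num : 8 ≠ 0)])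
  have hquot : ((2 * ⌈h * u⌉₊ / ⌊h / (16 * u ^ 2)⌋₊ : ℕ) : ℝ) ≤ 128 * u ^ 3 := by
    refine Nat.cast_div_le.trans (div_le_of_le_mul₀ (by positivity) (by positivity) ?_)
    push_cast
    calc 2 * (⌈h * u⌉₊ : ℝ) ≤ 2 * (2 * (h * u)) := by gcongr
      _ = 128 * u ^ 3 * (h / (32 * u ^ 2)) := by field_simp; norm_num
      _ ≤ 128 * u ^ 3 * ⌊h / (16 * u ^ 2)⌋₊ := by gcongr
  have hfloor : (⌊h / u ^ 8⌋₊ : ℝ) ≤ h / u ^ 8 := Nat.floor_le (by positivity)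
  push_cast at hquot ⊢
  calc _ ≤ (128 * u ^ 3 + 1) * (h / u ^ 8) := by gcongr
    _ ≤ u ^ 4 * (h / u ^ 8) := by gcongr; nlinarith [one_le_pow₀ (n := 3) (by linarith : 1 ≤ u)]
    _ = h / u ^ 4 := by field_simp

lemma floor_div_floor_le (hu : 1 ≤ u) (huh : u ^ 8 ≤ h) :
    ((⌊h / (16 * u ^ 2)⌋₊ / ⌊h / u ^ 8⌋₊ : ℕ) : ℝ) ≤ u ^ 6 := by
  have hu₀ : 0 < u := by linarith
  have hh : 0 < h := (pow_pos hu₀ 8).trans_le huh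
  refine Nat.cast_div_le.trans (div_le_of_le_mul₀ (by positivity) (by positivity) ?_)
  calc (⌊h / (16 * u ^ 2)⌋₊ : ℝ) ≤ h / (16 * u ^ 2) := Nat.floor_le (by positivity)
    _ ≤ h / (2 * u ^ 2) := by gcongr; norm_num
    _ = u ^ 6 * (h / (2 * u ^ 8)) := by field_simp
    _ ≤ u ^ 6 * ⌊h / u ^ 8⌋₊ := by
      gcongr
      exact div_two_mul_le_floor_div (by positivity) huh

lemma card_filter_div_pow_lt_card_nearSet_le {N : ℕ} (hN : (N : ℝ) = h ^ 2) (hu : 129 ≤ u)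
    (huh : u ^ 8 ≤ h) :
    (#{t ∈ range N | h / u ^ 4 < #(nearSet (((t : ℕ) : ℝ) / N) (u ^ 2 / h) ⌈h * u⌉₊)} : ℝ) ≤
      36 * u ^ 22 := by
  have hu₀ : 0 < u := by linarith
  have hh : 0 < h := (pow_pos hu₀ 8).trans_le huh
  have hN₀ : 0 < N := by exact_mod_cast hN ▸ pow_pos hh 2
  have huH : 16 * u ^ 2 ≤ h := (sixteen_mul_sq_le_pow_eight (by linarith)).trans huh
  set H := ⌊h / (16 * u ^ 2)⌋₊
  set w := ⌊h / u ^ 8⌋₊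
  have hH : 0 < H := Nat.floor_pos.mpr ((one_le_div (by positivity)).mpr huH)
  have hw : 0 < w := Nat.floor_pos.mpr ((one_le_div (by positivity)).mpr huh)
  have hεH : 16 * (u ^ 2 / h) * H ≤ 1 := by
    calc 16 * (u ^ 2 / h) * H ≤ 16 * (u ^ 2 / h) * (h / (16 * u ^ 2)) := by
          gcongr
          exact Nat.floor_le (by positivity)
      _ = 1 := by field_simp
  have hwidth : 2 * (2 * (u ^ 2 / h) / w) * N + 1 ≤ 9 * u ^ 10 := by
    have hone : 1 ≤ u ^ 10 := one_le_pow₀ (by linarith)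
    calc 2 * (2 * (u ^ 2 / h) / w) * N + 1
        ≤ 2 * (2 * (u ^ 2 / h) / (h / (2 * u ^ 8))) * N + 1 := by
          gcongr
          exact div_two_mul_le_floor_div (by positivity) huh
      _ = 8 * u ^ 10 + 1 := by rw [hN]; field_simp; ring
      _ ≤ 9 * u ^ 10 := by linarith
  calc _ ≤ (#{t ∈ range N | (2 * ⌈h * u⌉₊ / H + 1) * w <
        #(nearSet (((t : ℕ) : ℝ) / N) (u ^ 2 / h) ⌈h * u⌉₊)} : ℝ) := by
        gcongr with t
        intro hlt
        exact_mod_cast (two_mul_ceil_div_floor_add_one_mul_floor_le hu huh).trans_lt hlt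
    _ ≤ 4 * (H / w : ℕ) ^ 2 * (2 * (2 * (u ^ 2 / h) / w) * N + 1) :=
        card_filter_lt_card_nearSet_le hN₀ hH hw (by positivity) hεH
    _ ≤ 4 * (u ^ 6) ^ 2 * (9 * u ^ 10) := by
        gcongr
        exact floor_div_floor_le (by linarith) huh
    _ = 36 * u ^ 22 := by ring

end Parameters

section CharFunBound

variable {V : Type*} {p u h : ℝ}

lemma exp_neg_le_inv_pow (hh : 0 < h) {k : ℕ} {x : ℝ} (hx : k * Real.log h ≤ x) :
    Real.exp (-x) ≤ (h ^ k)⁻¹ := by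
  rw [Real.exp_neg]
  gcongr
  rwa [← Real.log_le_iff_le_exp (by positivity), Real.log_pow]

lemma exp_neg_mul_sq_mul_le (hu : 0 < u) (hh : 0 < h) (hp : p ∈ Set.Icc 0 1)
    (hlog : 8 * Real.log h ≤ p * (1 - p) * u ^ 2) {y : ℝ} (hy : h ^ 2 / u ^ 2 ≤ y) :
    Real.exp (-(8 * (p * (1 - p)) * (u ^ 2 / h) ^ 2 * y)) ≤ (h ^ 16)⁻¹ := by
  have hσ : 0 ≤ p * (1 - p) := mul_nonneg hp.1 (sub_nonneg.mpr hp.2)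
  refine exp_neg_le_inv_pow hh ?_
  calc (16 : ℕ) * Real.log h = 2 * (8 * Real.log h) := by push_cast; ring
    _ ≤ 2 * (p * (1 - p) * u ^ 2) := by gcongr
    _ ≤ 8 * (p * (1 - p) * u ^ 2) := by gcongr; norm_num
    _ = 8 * (p * (1 - p)) * (u ^ 2 / h) ^ 2 * (h ^ 2 / u ^ 2) := by field_simp
    _ ≤ 8 * (p * (1 - p)) * (u ^ 2 / h) ^ 2 * y := by gcongr

lemma bernoulliProb_card_eq_le_six_mul (hu : 1 ≤ u) (hh : 1 ≤ h) (hp : p ∈ Set.Icc 0 1)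
    (hlog : 8 * Real.log h ≤ p * (1 - p) * u ^ 2) {P : Finset V} (hP : h ^ 2 / u ^ 2 ≤ #P) (s : ℕ) :
    bernoulliProb p P (#· = s) ≤ 6 * (u ^ 2 / h) := by
  have hsmall : (h ^ 16)⁻¹ ≤ u ^ 2 / h := by
    calc (h ^ 16)⁻¹ ≤ h⁻¹ := by gcongr; exact le_self_pow₀ hh (by norm_num)
      _ ≤ u ^ 2 * h⁻¹ := le_mul_of_one_le_left (by positivity) (one_le_pow₀ hu)
      _ = u ^ 2 / h := (div_eq_mul_inv _ _).symm
  have hpoint := bernoulliProb_card_eq_le hp P s (ε := u ^ 2 / h) (by positivity)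
  have hexp := exp_neg_mul_sq_mul_le (by positivity) (by positivity) hp hlog hP
  linarith

lemma ceil_sq_div_sq_le (hu : 2 ≤ u) (hh : u ≤ h) : (⌈h ^ 2 / u ^ 2⌉₊ : ℝ) ≤ h ^ 2 / u := by
  have : 0 < u := by linarith
  calc (⌈h ^ 2 / u ^ 2⌉₊ : ℝ) ≤ 2 * (h ^ 2 / u ^ 2) := by
        refine Nat.ceil_le_two_mul ((by norm_num : (2⁻¹ : ℝ) ≤ 1).trans ?_)
        rw [one_le_div (by positivity)]
        gcongr
    _ ≤ u * (h ^ 2 / u ^ 2) := by gcongr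
    _ = h ^ 2 / u := by field_simp

lemma exp_sq_div_two_mul_sub_le (hu : 0 < u) (hh : 0 < h)
    (hlog : 8 * Real.log h ≤ p * (1 - p) * u ^ 2) {m : ℝ} (hm : m ≤ h ^ 2) :
    Real.exp ((u / h) ^ 2 / 2 * m - u / h * ⌈h * u⌉₊) ≤ (h ^ 16)⁻¹ := by
  have hσ : p * (1 - p) ≤ 1 / 4 := by nlinarith [sq_nonneg (p - 1 / 2)]
  calc _ ≤ Real.exp ((u / h) ^ 2 / 2 * h ^ 2 - u / h * (h * u)) := by
        gcongr
        exact Nat.le_ceil _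
    _ = Real.exp (-(u ^ 2 / 2)) := by
        congr 1
        field_simp
        ring
    _ ≤ (h ^ 16)⁻¹ := exp_neg_le_inv_pow hh (by push_cast; nlinarith [sq_nonneg u])

variable [Fintype V] {M : V → V → ℤ} {A B : Finset V} {L : ℕ}

lemma IsRichFamily.bernoulliMean_prod_norm_charFun_le_inv_pow (hM : ∀ x y, |M x y| ≤ 1)
    {τ : Fin ⌈h ^ 2 / u ^ 2⌉₊ → Fin L → V} (hτ : IsRichFamily M A B ⌈h ^ 2 / u ^ 2⌉₊ τ)
    (hp : p ∈ Set.Icc 0 1) (hV : Fintype.card V = h ^ 2) (hu : 2 * L + 6 ≤ u) (huh : u ≤ h)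
    (hlog : 8 * Real.log h ≤ p * (1 - p) * u ^ 2) (hL : h ^ 16 ≤ u ^ L) {θ : ℝ}
    (hθ : #(nearSet θ (u ^ 2 / h) ⌈h * u⌉₊) ≤ h / u ^ 4) :
    (bernoulliMean p B fun b ↦ bernoulliMean p B fun b' ↦
        ∏ x ∈ A, ‖(p * 𝐞 (θ * rowSum M x b - θ * rowSum M x b') + (1 - p) : ℂ)‖) ≤
      ((h ^ 6)⁻¹) ^ 2 := by
  have : (0 : ℝ) ≤ L := Nat.cast_nonneg L
  have hu₀ : 6 ≤ u := by linarith
  have hh : 6 ≤ h := hu₀.trans huh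
  set t := ⌈h ^ 2 / u ^ 2⌉₊
  have ht : h ^ 2 / u ^ 2 ≤ t := Nat.le_ceil _
  have ht' : (t : ℝ) ≤ h ^ 2 :=
    (ceil_sq_div_sq_le (by linarith) huh).trans (div_le_self (by positivity) (by linarith))
  have hB : (#B : ℝ) ≤ h ^ 2 := hV ▸ Nat.cast_le.mpr (card_le_univ B)
  have hhit : #(nearSet θ (u ^ 2 / h) ⌈h * u⌉₊) * (6 * (u ^ 2 / h)) ≤ u⁻¹ := by
    calc _ ≤ h / u ^ 4 * (6 * (u ^ 2 / h)) := by gcongr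
      _ = 6 / u * u⁻¹ := by field_simp
      _ ≤ u⁻¹ := mul_le_of_le_one_left (by positivity) ((div_le_one (by linarith)).mpr hu₀)
  have hhits : (#(nearSet θ (u ^ 2 / h) ⌈h * u⌉₊) * (6 * (u ^ 2 / h))) ^ L ≤ (h ^ 16)⁻¹ := by
    refine (pow_le_pow_left₀ (by positivity) hhit L).trans ?_
    rw [inv_pow]
    gcongr
  have hmain := hτ.bernoulliMean_prod_norm_charFun_le hM hp (fun P hP s ↦
    bernoulliProb_card_eq_le_six_mul (by linarith) (by linarith) hp hlog
      (ht.trans (Nat.cast_le.mpr hP)) s) θ (ε := u ^ 2 / h) (by positivity) ⌈h * u⌉₊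
    (l := u / h) (by positivity)
  refine hmain.trans ?_
  calc _ ≤ (h ^ 16)⁻¹ + h ^ 2 * (L * (2 * (h ^ 16)⁻¹) + (h ^ 16)⁻¹) := by
        gcongr
        · exact exp_neg_mul_sq_mul_le (by linarith) (by linarith) hp hlog ht
        · exact exp_sq_div_two_mul_sub_le (by linarith) (by linarith) hlog hB
    _ = (1 + h ^ 2 * (2 * L + 1)) * (h ^ 16)⁻¹ := by ring
    _ ≤ h ^ 4 * (h ^ 16)⁻¹ := by
        gcongr
        calc 1 + h ^ 2 * (2 * L + 1) ≤ h ^ 2 + h ^ 2 * (2 * L + 1) := by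
              gcongr
              exact one_le_pow₀ (by linarith)
          _ = h ^ 2 * (2 * L + 2) := by ring
          _ ≤ h ^ 2 * h ^ 2 := by gcongr; nlinarith
          _ = h ^ 4 := by ring
    _ = ((h ^ 6)⁻¹) ^ 2 := by field_simp

lemma IsRichFamily.norm_bernoulliMean_fourierChar_le [DecidableEq V] (hM : ∀ x y, |M x y| ≤ 1)
    (hAB : Disjoint A B) {τ : Fin ⌈h ^ 2 / u ^ 2⌉₊ → Fin L → V}
    (hτ : IsRichFamily M A B ⌈h ^ 2 / u ^ 2⌉₊ τ) {X : Finset V → ℤ}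
    (hX : ∀ U W, Disjoint U W → X (U ∪ W) = X U + X W + ∑ x ∈ U, rowSum M x W)
    (hp : p ∈ Set.Icc 0 1) (hV : Fintype.card V = h ^ 2) (hu : 2 * L + 6 ≤ u) (huh : u ≤ h)
    (hlog : 8 * Real.log h ≤ p * (1 - p) * u ^ 2) (hL : h ^ 16 ≤ u ^ L) {θ : ℝ}
    (hθ : #(nearSet θ (u ^ 2 / h) ⌈h * u⌉₊) ≤ h / u ^ 4) (ψ : ℝ) :
    ‖bernoulliMean p univ fun U ↦ (𝐞 (θ * X U + ψ * #U) : ℂ)‖ ≤ (h ^ 6)⁻¹ := by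
  have hh : 0 < h := by linarith [(Nat.cast_nonneg L : (0 : ℝ) ≤ L)]
  refine le_of_sq_le_sq ((norm_sq_bernoulliMean_fourierChar_le hp hAB (subset_univ _)
    (φ := fun x W ↦ θ * rowSum M x W) fun U W hUW ↦ ?_).trans
    (hτ.bernoulliMean_prod_norm_charFun_le_inv_pow hM hp hV hu huh hlog hL hθ)) (by positivity)
  rw [hX U W hUW, card_union_of_disjoint hUW, ← mul_sum]
  push_cast
  ring

end CharFunBound

section BoundedHomogeneousSets

lemma div_add_add_one_mul_inv_pow_le {n u h : ℝ} (hn : n = h ^ 2) (hu : 7 ≤ u) (hh : 1 ≤ h) :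
    36 * u ^ 22 / n + (n + 1) * (h ^ 6)⁻¹ ≤ u ^ 24 / n := by
  subst hn
  calc _ ≤ 36 * u ^ 22 / h ^ 2 + (h ^ 2 + h ^ 2) * (h ^ 6)⁻¹ := by
        gcongr
        exact one_le_pow₀ hh
    _ = (36 * u ^ 22 + 2 / h ^ 2) / h ^ 2 := by
        field_simp
        ring
    _ ≤ (36 * u ^ 22 + 2 * u ^ 22) / h ^ 2 := by
        gcongr
        exact (div_le_self zero_le_two (one_le_pow₀ hh)).trans
          (le_mul_of_one_le_right zero_le_two (one_le_pow₀ (by linarith)))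
    _ = 38 * u ^ 22 / h ^ 2 := by ring
    _ ≤ u ^ 2 * u ^ 22 / h ^ 2 := by gcongr; nlinarith
    _ = u ^ 24 / h ^ 2 := by ring

variable {V : Type*} [Fintype V] [DecidableEq V] {G : SimpleGraph V} [DecidableRel G.Adj]

lemma card_filter_powersetCard_eq_div_choose_le_of_homogeneousSetsBounded {l L k : ℕ} {u h : ℝ}
    (hl : HomogeneousSetsBounded G l) (hl₀ : 0 < l) {X : Finset V → ℤ}
    (hX : ∀ U W, Disjoint U W → X (U ∪ W) = X U + X W + ∑ x ∈ U, rowSum (G.adjMatrix ℤ) x W)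
    (hV : Fintype.card V = h ^ 2) (hk : 0 < k) (hkV : k < Fintype.card V)
    (hu : 2 * L + 129 ≤ u) (huh : u ^ 8 ≤ h) (hlu : (4 * l ^ 2) ^ (2 * L + 5) ≤ u)
    (hlog : 8 * Real.log h ≤ k / Fintype.card V * (1 - k / Fintype.card V) * u ^ 2)
    (hL : h ^ 16 ≤ u ^ L) (x : ℤ) :
    (#{U ∈ powersetCard k univ | X U = x} / (Fintype.card V).choose k : ℝ) ≤
      u ^ 24 / Fintype.card V := by
  have hu₁ : 129 ≤ u := by linarith [(Nat.cast_nonneg L : (0 : ℝ) ≤ L)]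
  have huh₁ : u ≤ h := (le_self_pow₀ (by linarith) (by norm_num)).trans huh
  have hh : 1 ≤ h := by linarith
  set n := Fintype.card V
  have hn : (0 : ℝ) < n := hV ▸ by positivity
  have hp : (k / n : ℝ) ∈ Set.Icc 0 1 :=
    ⟨by positivity, div_le_one_of_le₀ (by exact_mod_cast hkV.le) hn.le⟩
  have hsize : (4 * l ^ 2) ^ (2 * L + 5) * ⌈h ^ 2 / u ^ 2⌉₊ ≤ n := by
    have : (4 * l ^ 2 : ℝ) ^ (2 * L + 5) * ⌈h ^ 2 / u ^ 2⌉₊ ≤ n :=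
      calc _ ≤ u * (h ^ 2 / u) := by gcongr; exact ceil_sq_div_sq_le (by linarith) huh₁
        _ = n := by rw [hV]; field_simp
    exact_mod_cast this
  obtain ⟨A, B, hAB, τ, hτ⟩ :=
    exists_disjoint_isRichFamily hl hl₀ (Nat.ceil_pos.mpr (by positivity)) hsize
  have hM (x y : V) : |G.adjMatrix ℤ x y| ≤ 1 := by
    rcases (G.isAdjMatrix_adjMatrix ℤ).zero_or_one x y with h₀ | h₀ <;> rw [h₀] <;> norm_num
  have hslice := card_filter_powersetCard_eq_div_choose_le (S := univ) (X := X) (β := (h ^ 6)⁻¹)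
    (N := n) (bad := {t ∈ range n | h / u ^ 4 <
      #(nearSet (((t : ℕ) : ℝ) / n) (u ^ 2 / h) ⌈h * u⌉₊)}) hk hkV (by exact_mod_cast hn)
    (by positivity) (fun t ht hgood ↦ hτ.norm_bernoulliMean_fourierChar_le hM hAB hX hp hV
      (by linarith) huh₁ hlog hL (by simpa [mem_range.mp ht] using hgood)) x
  rw [card_univ] at hslice
  refine hslice.trans ?_
  calc _ ≤ 36 * u ^ 22 / n + (n + 1) * (h ^ 6)⁻¹ := by
        gcongr
        exact card_filter_div_pow_lt_card_nearSet_le hV hu₁ huh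
    _ ≤ u ^ 24 / n := div_add_add_one_mul_inv_pow_le hV (by linarith) hh

end BoundedHomogeneousSets

section InducedEdges

variable {n : ℕ} (G : SimpleGraph (Fin n))

lemma inducedEdgeCount_eq_ncard (s : Finset (Fin n)) :
    inducedEdgeCount G s = {e ∈ G.edgeSet | ∀ v ∈ e, v ∈ s}.ncard :=
  Nat.card_coe_set_eq _

lemma setOf_mem_edgeSet_insert (s : Finset (Fin n)) (a : Fin n) :
    {e ∈ G.edgeSet | ∀ v ∈ e, v ∈ insert a s} =
      {e ∈ G.edgeSet | ∀ v ∈ e, v ∈ s} ∪ (s(a, ·)) '' {y | y ∈ s ∧ G.Adj a y} := by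
  ext ⟨x, y⟩
  have := G.irrefl (v := a)
  have := G.adj_comm
  simp only [Set.mem_ofPred_eq, SimpleGraph.mem_edgeSet, Sym2.mem_iff, mem_insert, forall_eq_or_imp,
    forall_eq, Set.mem_union, Set.mem_image, Sym2.eq_iff]
  grind

variable [DecidableRel G.Adj]

lemma inducedEdgeCount_insert {s : Finset (Fin n)} {a : Fin n} (ha : a ∉ s) :
    (inducedEdgeCount G (insert a s) : ℤ) = inducedEdgeCount G s + rowSum (G.adjMatrix ℤ) a s := by
  have hdisj : Disjoint {e ∈ G.edgeSet | ∀ v ∈ e, v ∈ s}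
      ((s(a, ·)) '' {y | y ∈ s ∧ G.Adj a y}) := by
    rw [Set.disjoint_right]
    rintro _ ⟨y, -, rfl⟩ ⟨-, h⟩
    exact ha (h a (Sym2.mem_mk_left a y))
  have hrow : rowSum (G.adjMatrix ℤ) a s = {y | y ∈ s ∧ G.Adj a y}.ncard := by
    simp [rowSum, ← coe_filter, Set.ncard_coe_finset]
  rw [inducedEdgeCount_eq_ncard, setOf_mem_edgeSet_insert, Set.ncard_union_eq hdisj,
    Set.ncard_image_of_injective _ (fun y z h ↦ Sym2.congr_right.mp h), hrow,
    inducedEdgeCount_eq_ncard]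
  push_cast
  rfl

lemma inducedEdgeCount_union {U W : Finset (Fin n)} (h : Disjoint U W) :
    (inducedEdgeCount G (U ∪ W) : ℤ) = inducedEdgeCount G U + inducedEdgeCount G W +
      ∑ x ∈ U, rowSum (G.adjMatrix ℤ) x W := by
  induction U using Finset.induction_on with
  | empty =>
    have hempty : inducedEdgeCount G ∅ = 0 := by
      rw [inducedEdgeCount_eq_ncard, Set.ncard_eq_zero, Set.eq_empty_iff_forall_notMem]
      rintro ⟨x, y⟩ ⟨-, hmem⟩
      exact notMem_empty x (hmem x (Sym2.mem_mk_left x y))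
    simp [hempty]
  | insert a U ha ih =>
    rw [disjoint_insert_left] at h
    have hrow : rowSum (G.adjMatrix ℤ) a (U ∪ W) =
        rowSum (G.adjMatrix ℤ) a U + rowSum (G.adjMatrix ℤ) a W := sum_union h.2
    rw [insert_union, inducedEdgeCount_insert G (by simp [ha, h.1]), inducedEdgeCount_insert G ha,
      ih h.2, sum_insert ha, hrow]
    ring

end InducedEdges

section Ramsey

lemma natCard_setOf_card_eq_and {α : Type*} [Fintype α] (k : ℕ) (P : Finset α → Prop)
    [DecidablePred P] :
    Nat.card {s : Finset α | #s = k ∧ P s} = #{s ∈ powersetCard k univ | P s} := by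
  rw [Nat.card_coe_set_eq, ← Set.ncard_coe_finset]
  simp

variable {n k : ℕ} {C c δ : ℝ} {G : SimpleGraph (Fin n)}

lemma IsCRamsey.homogeneousSetsBounded (hG : IsCRamsey C G) :
    HomogeneousSetsBounded G ⌈C * Real.logb 2 n⌉₊ := by
  refine fun K hK ↦ le_of_not_gt fun hlt ↦ ?_
  have hnot := hG K (Nat.lt_of_ceil_lt hlt).le
  rw [SimpleGraph.isClique_compl] at hnot
  tauto

lemma sq_le_div_mul_one_sub_div (hn : 0 < n) (hc : 0 ≤ c) (hck : c * n ≤ k)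
    (hkc : k ≤ (1 - c) * n) : c ^ 2 ≤ (k / n : ℝ) * (1 - k / n) := by
  have hlow : c ≤ k / n := (le_div_iff₀ (by positivity)).mpr hck
  have hhigh : (k / n : ℝ) ≤ 1 - c := (div_le_iff₀ (by positivity)).mpr hkc
  rw [sq]
  gcongr
  linarith

lemma IsCRamsey.card_filter_powersetCard_eq_div_choose_le {L : ℕ} (hG : IsCRamsey C G) (hC : 0 < C)
    (hc : 0 < c) (hck : c * n ≤ k) (hkc : k ≤ (1 - c) * n) (hδ : 16 * δ ≤ 1) (hL : 8 ≤ δ * L)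
    (hn : 2 ≤ n) (hu : 2 * L + 129 ≤ (n : ℝ) ^ δ)
    (hlu : (4 * (⌈C * Real.logb 2 n⌉₊ : ℝ) ^ 2) ^ (2 * L + 5) ≤ (n : ℝ) ^ δ)
    (hlog : 4 * Real.log n ≤ c ^ 2 * ((n : ℝ) ^ δ) ^ 2) (x : ℤ) :
    (#{U ∈ powersetCard k univ | (inducedEdgeCount G U : ℤ) = x} / n.choose k : ℝ) ≤
      (n : ℝ) ^ (24 * δ - 1) := by
  classical
  have hn₀ : (0 : ℝ) < n := by positivity
  have hn₁ : (1 : ℝ) ≤ n := by exact_mod_cast (by omega : 1 ≤ n)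
  have hpow (m : ℕ) : ((n : ℝ) ^ δ) ^ m = (n : ℝ) ^ (δ * m) := by
    rw [Real.rpow_mul hn₀.le, Real.rpow_natCast]
  have hl₀ : 0 < ⌈C * Real.logb 2 n⌉₊ :=
    Nat.ceil_pos.mpr (mul_pos hC (Real.logb_pos one_lt_two (by exact_mod_cast hn)))
  have hk : 0 < k := by exact_mod_cast (by positivity : 0 < c * n).trans_le hck
  have hkn : k < n := by exact_mod_cast hkc.trans_lt (by nlinarith : (1 - c) * n < (n : ℝ))
  have hbound := card_filter_powersetCard_eq_div_choose_le_of_homogeneousSetsBounded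
    (h := (n : ℝ) ^ (1 / 2 : ℝ)) (X := fun U ↦ (inducedEdgeCount G U : ℤ)) (k := k) (L := L)
    (u := (n : ℝ) ^ δ) hG.homogeneousSetsBounded hl₀ (fun U W ↦ inducedEdgeCount_union G) ?_ hk
    (by simpa using hkn) hu ?_ hlu ?_ ?_ x
  · rw [Fintype.card_fin] at hbound
    refine hbound.trans_eq ?_
    rw [hpow, Real.rpow_sub_one hn₀.ne', mul_comm δ]
    norm_num
  · rw [Fintype.card_fin, ← Real.rpow_mul_natCast hn₀.le]
    norm_num
  · rw [hpow]
    exact Real.rpow_le_rpow_of_exponent_le hn₁ (by push_cast; linarith)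
  · rw [Fintype.card_fin, Real.log_rpow hn₀]
    have := sq_le_div_mul_one_sub_div (by omega) hc.le hck hkc
    calc _ = 4 * Real.log n := by ring
      _ ≤ c ^ 2 * ((n : ℝ) ^ δ) ^ 2 := hlog
      _ ≤ _ := by gcongr
  · rw [hpow, ← Real.rpow_mul_natCast hn₀.le]
    exact Real.rpow_le_rpow_of_exponent_le hn₁ (by push_cast; linarith)

end Ramsey

section Asymptotics

open Filter

lemma eventually_le_rpow (a : ℝ) {r : ℝ} (hr : 0 < r) : ∀ᶠ n : ℕ in atTop, a ≤ (n : ℝ) ^ r :=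
  ((tendsto_rpow_atTop hr).comp tendsto_natCast_atTop_atTop).eventually_ge_atTop a

lemma eventually_log_le_mul_rpow {a r : ℝ} (ha : 0 < a) (hr : 0 < r) :
    ∀ᶠ n : ℕ in atTop, Real.log n ≤ a * (n : ℝ) ^ r := by
  filter_upwards [tendsto_natCast_atTop_atTop.eventually ((isLittleO_log_rpow_atTop hr).def ha)]
    with n hn
  rw [Real.norm_of_nonneg (by positivity : 0 ≤ (n : ℝ) ^ r)] at hn
  exact (Real.le_norm_self _).trans hn

lemma eventually_four_mul_ceil_logb_sq_pow_le {C r : ℝ} (hC : 0 < C) (hr : 0 < r) {m : ℕ}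
    (hm : m ≠ 0) :
    ∀ᶠ n : ℕ in atTop, (4 * (⌈C * Real.logb 2 n⌉₊ : ℝ) ^ 2) ^ m ≤ (n : ℝ) ^ r := by
  have : 0 < Real.log 2 := Real.log_pos one_lt_two
  filter_upwards [eventually_ge_atTop 1, eventually_le_rpow 4 (r := r / (2 * m)) (by positivity),
    eventually_log_le_mul_rpow (a := Real.log 2 / (4 * C)) (r := r / (2 * m)) (by positivity)
      (by positivity)] with n hn hfour hlog
  have hlogb : 0 ≤ C * Real.logb 2 n :=
    mul_nonneg hC.le (Real.logb_nonneg one_lt_two (by exact_mod_cast hn))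
  have hlogb_le : C * Real.logb 2 n ≤ (n : ℝ) ^ (r / (2 * m)) / 4 :=
    calc C * Real.logb 2 n = C / Real.log 2 * Real.log n := by rw [Real.logb]; ring
      _ ≤ C / Real.log 2 * (Real.log 2 / (4 * C) * (n : ℝ) ^ (r / (2 * m))) := by gcongr
      _ = (n : ℝ) ^ (r / (2 * m)) / 4 := by field_simp
  have hceil : 2 * (⌈C * Real.logb 2 n⌉₊ : ℝ) ≤ (n : ℝ) ^ (r / (2 * m)) := by
    linarith [Nat.ceil_lt_add_one hlogb]
  calc _ = (2 * (⌈C * Real.logb 2 n⌉₊ : ℝ)) ^ (2 * m) := by rw [pow_mul]; ring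
    _ ≤ ((n : ℝ) ^ (r / (2 * m))) ^ (2 * m) := by gcongr
    _ = (n : ℝ) ^ r := by
      rw [← Real.rpow_mul_natCast n.cast_nonneg]
      congr 1
      push_cast
      field_simp

end Asymptotics

theorem statement2 (C c η : ℝ) (hC : 0 < C) (hc : 0 < c) (hη : 0 < η) :
    ∃ n₀ : ℕ, ∀ n : ℕ, n₀ ≤ n → ∀ G : SimpleGraph (Fin n), IsCRamsey C G →
      ∀ k : ℕ, c * n ≤ (k : ℝ) → (k : ℝ) ≤ (1 - c) * n → ∀ x : ℤ,
        -- Pr(X = x) for the edge count X of a uniformly random k-subset of vertices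
        (Nat.card {s : Finset (Fin n) | s.card = k ∧ (inducedEdgeCount G s : ℤ) = x} : ℝ)
            / (n.choose k) ≤ (n : ℝ) ^ (η - 1) := by
  obtain ⟨δ, hδ₀, hδη, hδ₁⟩ : ∃ δ : ℝ, 0 < δ ∧ 24 * δ ≤ η ∧ 16 * δ ≤ 1 :=
    ⟨min η 1 / 24, by positivity, by linarith [min_le_left η 1], by linarith [min_le_right η 1]⟩
  obtain ⟨L, hL⟩ := exists_nat_ge (8 / δ)
  rw [div_le_iff₀' hδ₀] at hL
  obtain ⟨n₀, hn₀⟩ := Filter.eventually_atTop.mp <| (Filter.eventually_ge_atTop 2).and <|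
    (eventually_le_rpow (2 * L + 129) hδ₀).and <|
    (eventually_four_mul_ceil_logb_sq_pow_le hC hδ₀ (2 * L + 4).succ_ne_zero).and <|
    eventually_log_le_mul_rpow (a := c ^ 2 / 4) (r := δ * 2) (by positivity) (by positivity)
  refine ⟨n₀, fun n hn G hG k hck hkc x ↦ ?_⟩
  obtain ⟨hn₂, hu, hlu, hlog⟩ := hn₀ n hn
  rw [Real.rpow_mul n.cast_nonneg, Real.rpow_two] at hlog
  rw [natCard_setOf_card_eq_and]
  refine (hG.card_filter_powersetCard_eq_div_choose_le hC hc hck hkc hδ₁ hL hn₂ hu hlu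
    (by linarith) x).trans ?_
  gcongr
  exact_mod_cast (by omega : 1 ≤ n)
end

section
/- For any integer r ≥ 1 and any 0 < ε ≤ 1, there is a constant c = c(r,ε) > 0 such that the following holds. Suppose v₁,…,v_r ∈ ℂⁿ are ε-independent vectors (over ℂ) with ‖v_i‖∞ ≤ 1 for each i, and let θ ∈ [−π, π] be a uniformly random phase. Then with probability at least c, the r×n real matrix with rows Re(e^{iθ}v₁),…,Re(e^{iθ}v_r) ∈ ℝⁿ is c-non-degenerate. -/
/-- Vectors `v₁,…,v_q ∈ 𝔽ⁿ` are `ε`-independent if there do not exist linearly dependent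
vectors `v₁',…,v_q'` with `‖v₁−v₁'‖₁ + … + ‖v_q−v_q'‖₁ ≤ εn`. -/
def EpsIndependent (𝔽 : Type*) [NormedField 𝔽] {q n : ℕ} (ε : ℝ)
    (v : Fin q → Fin n → 𝔽) : Prop :=
  ¬ ∃ v' : Fin q → Fin n → 𝔽, ¬ LinearIndependent 𝔽 v' ∧
      ∑ i, ∑ j, ‖v i j - v' i j‖ ≤ ε * n

/-- An `r × n` real matrix `M'` is `δ`-non-degenerate if for every Euclidean unit vector
`e ∈ ℝ^r` there are at least `δn` columns `w` of `M'` with `|⟨w,e⟩| ≥ δ`. -/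
def NonDeg {r n : ℕ} (δ : ℝ) (M' : Matrix (Fin r) (Fin n) ℝ) : Prop :=
  ∀ e : Fin r → ℝ, ∑ i, e i ^ 2 = 1 →
    δ * n ≤ (Nat.card {j : Fin n | δ ≤ |∑ i, M' i j * e i|} : ℝ)

/-!
If `V` has `ε`-independent rows `v₁,…,v_r`, then `‖∑ aᵢvᵢ‖₁ ≥ εn maxᵢ|aᵢ|`, so every eigenvalue of
the Gram matrix `VVᴴ` is at least `ε²n/r` and `det(VVᴴ) ≥ (ε²n/r)^r`. By Cauchy–Binet, `det(VVᴴ)`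
is the sum of the squared absolute values of the `r × r` minors of `V`, and likewise for
`M_θ = Re(e^{iθ}V)`. Up to a phase, `2^r` times a minor of `M_θ` is a polynomial of degree at most
`r` in `e^{2iθ}` whose constant coefficient is the complex conjugate of the corresponding minor of
`V`. Averaging over `r + 1` equally spaced values of `e^{2iθ}` recovers the constant coefficient, so
for each `θ` some `k ≤ r` satisfies `det(M_φ M_φᵀ) ≥ 4^{-r} det(VVᴴ)` with `φ = θ + kπ/(r + 1)`.

Since `M_φ` has entries in `[-1, 1]`, the trace of `M_φ M_φᵀ` is at most `rn`. A determinant of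
order `n^r` therefore forces the least eigenvalue to be of order `n`, and then every unit vector
pairs substantially with a positive proportion of the columns. Finally, `r + 1` translates
of the set of good phases cover an interval of length `π`, so a random phase is good with
probability at least `1/(2(r + 1))`.
-/

section EquallySpacedPoints

open Finset MeasureTheory Polynomial

theorem sum_eval_mul_primitiveRoot_pow {R : Type*} [CommRing R] [IsDomain R] {ζ : R} {N : ℕ}
    (hζ : IsPrimitiveRoot ζ N) {p : R[X]} (hp : p.natDegree < N) (z : R) :
    ∑ k ∈ range N, p.eval (z * ζ ^ k) = N * p.coeff 0 := by
  have sum_pow (m : ℕ) (hm : m < N) (hm0 : m ≠ 0) : ∑ k ∈ range N, (ζ ^ m) ^ k = 0 := by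
    have hne : ζ ^ m - 1 ≠ 0 := sub_ne_zero.2 (hζ.pow_ne_one_of_pos_of_lt hm0 hm)
    refine eq_zero_of_ne_zero_of_mul_left_eq_zero hne ?_
    rw [mul_geom_sum, pow_right_comm, hζ.pow_eq_one, one_pow, sub_self]
  calc ∑ k ∈ range N, p.eval (z * ζ ^ k)
      = ∑ m ∈ range N, p.coeff m * z ^ m * ∑ k ∈ range N, (ζ ^ m) ^ k := by
        simp_rw [eval_eq_sum_range' hp, mul_sum]
        rw [sum_comm]
        refine sum_congr rfl fun m _ => sum_congr rfl fun k _ => ?_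
        rw [mul_pow, pow_right_comm, mul_assoc]
    _ = p.coeff 0 * z ^ 0 * ∑ k ∈ range N, (ζ ^ 0) ^ k :=
        sum_eq_single_of_mem 0 (mem_range.2 (by lia)) fun m hm hm0 => by
          rw [sum_pow m (mem_range.1 hm) hm0, mul_zero]
    _ = N * p.coeff 0 := by simp [mul_comm]

theorem mul_norm_coeff_zero_sq_le_sum {𝕜 : Type*} [RCLike 𝕜] {ζ : 𝕜} {N : ℕ}
    (hζ : IsPrimitiveRoot ζ N) {p : 𝕜[X]} (hp : p.natDegree < N) (z : 𝕜) :
    N * ‖p.coeff 0‖ ^ 2 ≤ ∑ k ∈ range N, ‖p.eval (z * ζ ^ k)‖ ^ 2 := by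
  have hN : (0 : ℝ) < N := by exact_mod_cast pos_of_gt hp
  have hsum : N * ‖p.coeff 0‖ ≤ ∑ k ∈ range N, ‖p.eval (z * ζ ^ k)‖ := by
    rw [← RCLike.norm_natCast (K := 𝕜), ← norm_mul, ← sum_eval_mul_primitiveRoot_pow hζ hp z]
    exact norm_sum_le _ _
  refine le_of_mul_le_mul_left ?_ hN
  calc N * (N * ‖p.coeff 0‖ ^ 2) = (N * ‖p.coeff 0‖) ^ 2 := by ring
    _ ≤ (∑ k ∈ range N, ‖p.eval (z * ζ ^ k)‖) ^ 2 := by gcongr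
    _ ≤ N * ∑ k ∈ range N, ‖p.eval (z * ζ ^ k)‖ ^ 2 := by
        simpa using sq_sum_le_card_mul_sum_sq (s := range N) (f := fun k => ‖p.eval (z * ζ ^ k)‖)

theorem measure_le_card_mul_of_forall_exists_add_mem {G ι : Type*} [AddGroup G]
    [MeasurableSpace G] [MeasurableAdd G] (μ : Measure G) [μ.IsAddRightInvariant]
    {s : Finset ι} {t : ι → G} {A B : Set G} (h : ∀ x ∈ B, ∃ k ∈ s, x + t k ∈ A) :
    μ B ≤ #s * μ A :=
  calc μ B ≤ μ (⋃ k ∈ s, (· + t k) ⁻¹' A) := measure_mono fun x hx => by simpa using h x hx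
    _ ≤ ∑ k ∈ s, μ ((· + t k) ⁻¹' A) := measure_biUnion_finset_le s _
    _ = #s * μ A := by simp [measure_preimage_add_right]

theorem le_mul_volume_real_of_forall_exists_add_mem {ℓ : ℝ} (hℓ : 0 ≤ ℓ) (a : ℝ) {N : ℕ}
    {S : Set ℝ} (h : ∀ x, ∃ k ∈ range N, x + k * (ℓ / N) ∈ S) :
    ℓ ≤ N * volume.real (Set.Icc a (a + 2 * ℓ) ∩ S) := by
  have cover : ∀ x ∈ Set.Icc a (a + ℓ), ∃ k ∈ range N,
      x + k * (ℓ / N) ∈ Set.Icc a (a + 2 * ℓ) ∩ S := by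
    intro x hx
    obtain ⟨k, hk, hkS⟩ := h x
    have hkN : (k : ℝ) < N := by exact_mod_cast mem_range.1 hk
    have shift_nonneg : 0 ≤ k * (ℓ / N) := by positivity
    have shift_le : k * (ℓ / N) ≤ ℓ := by
      calc k * (ℓ / N) ≤ N * (ℓ / N) := by gcongr
        _ = ℓ := mul_div_cancel₀ _ (k.cast_nonneg.trans_lt hkN).ne'
    exact ⟨k, hk, ⟨by linarith [hx.1], by linarith [hx.2]⟩, hkS⟩
  have hvol := measure_le_card_mul_of_forall_exists_add_mem volume cover
  rw [Real.volume_Icc, card_range, add_sub_cancel_left] at hvol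
  have hfin : volume (Set.Icc a (a + 2 * ℓ) ∩ S) ≠ ⊤ :=
    measure_ne_top_of_subset Set.inter_subset_left isCompact_Icc.measure_ne_top
  simpa [hℓ, measureReal_def] using
    ENNReal.toReal_mono (ENNReal.mul_ne_top (ENNReal.natCast_ne_top N) hfin) hvol

end EquallySpacedPoints

section CauchyBinet

open Finset Matrix

variable {m n : Type*} [Fintype m] [DecidableEq m] [Fintype n]

theorem det_mul_eq_sum_prod_mul_det {R : Type*} [CommRing R] (A : Matrix m n R)
    (B : Matrix n m R) :
    (A * B).det = ∑ f : m → n, (∏ i, A i (f i)) * (B.submatrix f id).det := by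
  classical
  have rows : A * B = fun i => ∑ k, A i k • B k := by
    ext i k
    simp [Matrix.mul_apply]
  have expand := (detRowAlternating (R := R) (n := m)).toMultilinearMap.map_sum
    fun i k => A i k • B k
  rw [rows]
  refine expand.trans (sum_congr rfl fun f _ => ?_)
  exact (detRowAlternating (R := R) (n := m)).toMultilinearMap.map_smul_univ
    (fun i => A i (f i)) fun i => B (f i)

theorem sum_det_submatrix_mul_det_submatrix {R : Type*} [CommRing R] (A : Matrix m n R)
    (B : Matrix n m R) :
    ∑ f : m → n, (A.submatrix id f).det * (B.submatrix f id).det =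
      (Fintype.card m).factorial * (A * B).det := by
  have permuted (σ : Equiv.Perm m) :
      ∑ f : m → n, (∏ i, A (σ i) (f i)) * (B.submatrix f id).det =
        (Equiv.Perm.sign σ : ℤ) * (A * B).det := by
    rw [← det_permute σ (A * B)]
    exact (det_mul_eq_sum_prod_mul_det (A.submatrix σ id) B).symm
  calc ∑ f : m → n, (A.submatrix id f).det * (B.submatrix f id).det
      = ∑ σ : Equiv.Perm m, ((Equiv.Perm.sign σ : ℤ) : R) *
          ∑ f : m → n, (∏ i, A (σ i) (f i)) * (B.submatrix f id).det := by
        simp_rw [det_apply' (A.submatrix id _), sum_mul, mul_sum]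
        rw [sum_comm]
        simp [mul_assoc]
    _ = ∑ _σ : Equiv.Perm m, (A * B).det := by
        refine sum_congr rfl fun _ _ => ?_
        rw [permuted, ← mul_assoc, ← Int.cast_mul, Int.units_coe_mul_self, Int.cast_one, one_mul]
    _ = (Fintype.card m).factorial * (A * B).det := by simp [Fintype.card_perm]

theorem sum_norm_det_submatrix_sq {𝕜 : Type*} [RCLike 𝕜] (A : Matrix m n 𝕜) :
    ∑ f : m → n, ‖(A.submatrix id f).det‖ ^ 2 =
      (Fintype.card m).factorial * RCLike.re (A * Aᴴ).det := by
  have h := congrArg RCLike.re (sum_det_submatrix_mul_det_submatrix A Aᴴ)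
  simp_rw [← conjTranspose_submatrix, det_conjTranspose, RCLike.star_def, RCLike.mul_conj] at h
  rw [← RCLike.ofReal_natCast, RCLike.re_ofReal_mul] at h
  exact_mod_cast h

end CauchyBinet

section RealPartOfRotation

open Finset Matrix Polynomial

/-- The real matrix `Re(e^{iθ}V)`, whose rows are the real parts of the rows of `V` rotated by the
phase `θ`. -/
noncomputable def rotatedRe {m n : Type*} (V : Matrix m n ℂ) (θ : ℝ) : Matrix m n ℝ :=
  of fun i j => (Complex.exp (θ * Complex.I) * V i j).re

theorem abs_rotatedRe_apply_le {m n : Type*} (V : Matrix m n ℂ) (θ : ℝ) (i : m) (j : n) :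
    |rotatedRe V θ i j| ≤ ‖V i j‖ := by
  calc |rotatedRe V θ i j| ≤ ‖Complex.exp (θ * Complex.I) * V i j‖ := Complex.abs_re_le_norm _
    _ = ‖V i j‖ := by rw [norm_mul, Complex.norm_exp_ofReal_mul_I, one_mul]

variable {m n : Type*} [Fintype m] [DecidableEq m]

/-- The polynomial `det (X A + conj A)`. With `w = e^{iθ}` we have
`2 Re(w a) = w⁻¹ (w² a + conj a)`, so its value at `w²` is `2 ^ r det Re(w A)` up to a phase. -/
noncomputable def rotationDetPoly (A : Matrix m m ℂ) : ℂ[X] :=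
  ((X : ℂ[X]) • A.map C + (A.map (starRingEnd ℂ)).map C).det

theorem natDegree_rotationDetPoly_le (A : Matrix m m ℂ) :
    (rotationDetPoly A).natDegree ≤ Fintype.card m :=
  natDegree_det_X_add_C_le A _

theorem norm_coeff_zero_rotationDetPoly (A : Matrix m m ℂ) :
    ‖(rotationDetPoly A).coeff 0‖ = ‖A.det‖ := by
  rw [rotationDetPoly, coeff_det_X_add_C_zero, ← RingHom.mapMatrix_apply, ← RingHom.map_det,
    RCLike.norm_conj]

theorem norm_eval_rotationDetPoly (A : Matrix m m ℂ) (θ : ℝ) :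
    ‖(rotationDetPoly A).eval (Complex.exp (θ * Complex.I) ^ 2)‖ =
      2 ^ Fintype.card m * ‖(rotatedRe A θ).det‖ := by
  set w := Complex.exp (θ * Complex.I) with hw
  have norm_w : ‖w‖ = 1 := Complex.norm_exp_ofReal_mul_I θ
  have w_mul_conj : w * starRingEnd ℂ w = 1 := by simp [Complex.mul_conj', norm_w]
  have eval_matrix : (evalRingHom (w ^ 2)).mapMatrix
      ((X : ℂ[X]) • A.map C + (A.map (starRingEnd ℂ)).map C) =
      (2 * w) • Complex.ofRealHom.mapMatrix (rotatedRe A θ) := by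
    ext i j
    have entry : w ^ 2 * A i j + starRingEnd ℂ (A i j) = 2 * w * (w * A i j).re := by
      rw [Complex.re_eq_add_conj, map_mul]
      linear_combination -(starRingEnd ℂ (A i j)) * w_mul_conj
    simpa [rotatedRe, ← hw, mul_comm (A i j)] using entry
  rw [rotationDetPoly, ← coe_evalRingHom, RingHom.map_det, eval_matrix, det_smul, ← RingHom.map_det]
  simp [norm_w]

theorem mul_norm_det_sq_le_sum_rotatedRe (A : Matrix m m ℂ) {N : ℕ} (hN : Fintype.card m < N)
    (θ : ℝ) :
    N * ‖A.det‖ ^ 2 ≤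
      4 ^ Fintype.card m * ∑ k ∈ range N, ‖(rotatedRe A (θ + k * (Real.pi / N))).det‖ ^ 2 := by
  have hN0 : N ≠ 0 := by lia
  have equally_spaced (k : ℕ) :
      Complex.exp (θ * Complex.I) ^ 2 * Complex.exp (2 * Real.pi * Complex.I / N) ^ k =
        Complex.exp ((θ + k * (Real.pi / N) : ℝ) * Complex.I) ^ 2 := by
    rw [← Complex.exp_nat_mul, ← Complex.exp_nat_mul, ← Complex.exp_nat_mul, ← Complex.exp_add]
    congr 1
    push_cast
    ring
  have sq_norm_eval (φ : ℝ) : ‖(rotationDetPoly A).eval (Complex.exp (φ * Complex.I) ^ 2)‖ ^ 2 =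
      4 ^ Fintype.card m * ‖(rotatedRe A φ).det‖ ^ 2 := by
    rw [norm_eval_rotationDetPoly, mul_pow, pow_right_comm]
    norm_num
  have mean := mul_norm_coeff_zero_sq_le_sum (Complex.isPrimitiveRoot_exp N hN0)
    ((natDegree_rotationDetPoly_le A).trans_lt hN) (Complex.exp (θ * Complex.I) ^ 2)
  simpa only [equally_spaced, sq_norm_eval, norm_coeff_zero_rotationDetPoly, ← mul_sum] using mean

variable [Fintype n]

theorem mul_re_det_mul_conjTranspose_le_sum_rotatedRe (V : Matrix m n ℂ) {N : ℕ}
    (hN : Fintype.card m < N) (θ : ℝ) :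
    N * RCLike.re (V * Vᴴ).det ≤ 4 ^ Fintype.card m * ∑ k ∈ range N,
      (rotatedRe V (θ + k * (Real.pi / N)) * (rotatedRe V (θ + k * (Real.pi / N)))ᴴ).det := by
  have hfact : (0 : ℝ) < (Fintype.card m).factorial := by positivity
  have gram (φ : ℝ) : ∑ f : m → n, ‖(rotatedRe (V.submatrix id f) φ).det‖ ^ 2 =
      (Fintype.card m).factorial * (rotatedRe V φ * (rotatedRe V φ)ᴴ).det :=
    sum_norm_det_submatrix_sq (rotatedRe V φ)
  refine le_of_mul_le_mul_left ?_ hfact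
  calc (Fintype.card m).factorial * (N * RCLike.re (V * Vᴴ).det)
      = ∑ f : m → n, N * ‖(V.submatrix id f).det‖ ^ 2 := by
        rw [← mul_sum, sum_norm_det_submatrix_sq, mul_left_comm]
    _ ≤ ∑ f : m → n, 4 ^ Fintype.card m * ∑ k ∈ range N,
          ‖(rotatedRe (V.submatrix id f) (θ + k * (Real.pi / N))).det‖ ^ 2 :=
        sum_le_sum fun f _ => mul_norm_det_sq_le_sum_rotatedRe _ hN θ
    _ = _ := by
        rw [← mul_sum, sum_comm]
        simp_rw [gram, ← mul_sum]
        rw [mul_left_comm]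

theorem exists_re_det_mul_conjTranspose_le_rotatedRe (V : Matrix m n ℂ) {N : ℕ}
    (hN : Fintype.card m < N) (θ : ℝ) :
    ∃ k ∈ range N, RCLike.re (V * Vᴴ).det ≤ 4 ^ Fintype.card m *
      (rotatedRe V (θ + k * (Real.pi / N)) * (rotatedRe V (θ + k * (Real.pi / N)))ᴴ).det := by
  refine exists_le_of_sum_le (nonempty_range_iff.2 (by lia)) ?_
  simpa [mul_sum] using mul_re_det_mul_conjTranspose_le_sum_rotatedRe V hN θ

end RealPartOfRotation

section GramMatrix

open Finset Matrix
open scoped ComplexOrder MatrixOrder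

variable {𝕜 m n : Type*} [RCLike 𝕜] [Fintype m] [Fintype n]

theorem re_star_dotProduct_mul_conjTranspose_mulVec (M : Matrix m n 𝕜) (x : m → 𝕜) :
    RCLike.re (star x ⬝ᵥ (M * Mᴴ) *ᵥ x) = ∑ j, ‖(star x ᵥ* M) j‖ ^ 2 := by
  rw [← mulVec_mulVec, dotProduct_mulVec, mulVec_conjTranspose]
  simp only [dotProduct, Pi.star_apply, RCLike.star_def, RCLike.mul_conj, ← RCLike.ofReal_pow,
    ← RCLike.ofReal_sum, RCLike.ofReal_re]

theorem re_trace_mul_conjTranspose (M : Matrix m n 𝕜) :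
    RCLike.re (M * Mᴴ).trace = ∑ i, ∑ j, ‖M i j‖ ^ 2 := by
  simp only [trace, diag_apply, Matrix.mul_apply, conjTranspose_apply, RCLike.star_def,
    RCLike.mul_conj, ← RCLike.ofReal_pow, ← RCLike.ofReal_sum, RCLike.ofReal_re]

variable [DecidableEq m]

theorem forall_le_eigenvalues_iff {A : Matrix m m 𝕜} (hA : A.IsHermitian) {μ : ℝ} :
    (∀ i, μ ≤ hA.eigenvalues i) ↔
      ∀ x : m → 𝕜, μ * ∑ i, ‖x i‖ ^ 2 ≤ RCLike.re (star x ⬝ᵥ A *ᵥ x) := by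
  constructor
  · intro h x
    have hle : algebraMap ℝ (Matrix m m 𝕜) μ ≤ A :=
      (algebraMap_le_iff_le_spectrum hA.isSelfAdjoint).2 <| by
        rwa [hA.spectrum_real_eq_range_eigenvalues, Set.forall_mem_range]
    have hform := (Matrix.le_iff.1 hle).re_dotProduct_nonneg x
    rw [Algebra.algebraMap_eq_smul_one, sub_mulVec, smul_mulVec, one_mulVec, dotProduct_sub,
      dotProduct_smul, map_sub, RCLike.smul_re, sub_nonneg] at hform
    refine le_of_eq_of_le ?_ hform
    simp only [dotProduct, Pi.star_apply, RCLike.star_def, RCLike.conj_mul, ← RCLike.ofReal_pow,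
      ← RCLike.ofReal_sum, RCLike.ofReal_re]
  · intro h i
    rw [hA.eigenvalues_eq]
    refine le_of_eq_of_le ?_ (h _)
    rw [← EuclideanSpace.norm_sq_eq, hA.eigenvectorBasis.orthonormal.1 i, one_pow, mul_one]

theorem pow_card_le_re_det {A : Matrix m m 𝕜} (hA : A.IsHermitian) {μ : ℝ} (hμ : 0 ≤ μ)
    (h : ∀ x : m → 𝕜, μ * ∑ i, ‖x i‖ ^ 2 ≤ RCLike.re (star x ⬝ᵥ A *ᵥ x)) :
    μ ^ Fintype.card m ≤ RCLike.re A.det := by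
  rw [hA.det_eq_prod_eigenvalues, ← RCLike.ofReal_prod, RCLike.ofReal_re, ← card_univ,
    ← prod_const]
  exact prod_le_prod (fun _ _ => hμ) fun i _ => (forall_le_eigenvalues_iff hA).2 h i

-- All eigenvalues but the least one are at most the trace.
theorem re_det_mul_sum_norm_sq_le {A : Matrix m m 𝕜} (hA : A.PosSemidef) (x : m → 𝕜) :
    RCLike.re A.det * ∑ i, ‖x i‖ ^ 2 ≤
      RCLike.re A.trace ^ (Fintype.card m - 1) * RCLike.re (star x ⬝ᵥ A *ᵥ x) := by
  cases isEmpty_or_nonempty m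
  · simp
  set eig := hA.isHermitian.eigenvalues
  have eig_nonneg : ∀ i, 0 ≤ eig i := hA.eigenvalues_nonneg
  obtain ⟨least, hleast⟩ := Finite.exists_min eig
  have trace_eq : RCLike.re A.trace = ∑ i, eig i := by
    rw [hA.isHermitian.trace_eq_sum_eigenvalues, ← RCLike.ofReal_sum, RCLike.ofReal_re]
  have trace_nonneg : 0 ≤ RCLike.re A.trace := trace_eq ▸ sum_nonneg fun i _ => eig_nonneg i
  have det_le : RCLike.re A.det ≤ RCLike.re A.trace ^ (Fintype.card m - 1) * eig least := by
    rw [hA.isHermitian.det_eq_prod_eigenvalues, ← RCLike.ofReal_prod, RCLike.ofReal_re,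
      ← prod_erase_mul univ _ (mem_univ least), ← card_univ, ← card_erase_of_mem (mem_univ least),
      ← prod_const]
    refine mul_le_mul_of_nonneg_right (prod_le_prod (fun i _ => eig_nonneg i) fun i _ => ?_)
      (eig_nonneg least)
    exact trace_eq ▸ single_le_sum (fun j _ => eig_nonneg j) (mem_univ i)
  calc RCLike.re A.det * ∑ i, ‖x i‖ ^ 2
      ≤ RCLike.re A.trace ^ (Fintype.card m - 1) * eig least * ∑ i, ‖x i‖ ^ 2 := by gcongr
    _ = RCLike.re A.trace ^ (Fintype.card m - 1) * (eig least * ∑ i, ‖x i‖ ^ 2) := by ring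
    _ ≤ _ := by
        gcongr
        exact (forall_le_eigenvalues_iff hA.isHermitian).1 hleast x

theorem mul_sum_norm_sq_le_of_le_re_det {M : Matrix m n 𝕜} (hM : ∀ i j, ‖M i j‖ ≤ 1) {κ : ℝ}
    (hdet : κ * (Fintype.card m * Fintype.card n) ^ Fintype.card m ≤ RCLike.re (M * Mᴴ).det)
    (x : m → 𝕜) :
    κ * (Fintype.card m * Fintype.card n) * ∑ i, ‖x i‖ ^ 2 ≤ ∑ j, ‖(star x ᵥ* M) j‖ ^ 2 := by
  cases isEmpty_or_nonempty m
  · simpa using sum_nonneg fun j _ => sq_nonneg _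
  cases isEmpty_or_nonempty n
  · simp
  set size : ℝ := Fintype.card m * Fintype.card n with size_def
  have size_pos : 0 < size := by positivity
  have trace_le : RCLike.re (M * Mᴴ).trace ≤ size := by
    calc RCLike.re (M * Mᴴ).trace = ∑ i, ∑ j, ‖M i j‖ ^ 2 := re_trace_mul_conjTranspose M
      _ ≤ ∑ _i : m, ∑ _j : n, (1 : ℝ) := by
        gcongr with i _ j _
        exact pow_le_one₀ (norm_nonneg _) (hM i j)
      _ = size := by simp [size_def]
  have trace_nonneg : 0 ≤ RCLike.re (M * Mᴴ).trace := by
    rw [re_trace_mul_conjTranspose]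
    positivity
  refine le_of_mul_le_mul_left ?_ (pow_pos size_pos (Fintype.card m - 1))
  calc size ^ (Fintype.card m - 1) * (κ * size * ∑ i, ‖x i‖ ^ 2)
      = κ * size ^ Fintype.card m * ∑ i, ‖x i‖ ^ 2 := by
        rw [← pow_sub_one_mul (Fintype.card_ne_zero (α := m)) size]
        ring
    _ ≤ RCLike.re (M * Mᴴ).det * ∑ i, ‖x i‖ ^ 2 := by gcongr
    _ ≤ RCLike.re (M * Mᴴ).trace ^ (Fintype.card m - 1) *
          RCLike.re (star x ⬝ᵥ (M * Mᴴ) *ᵥ x) :=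
        re_det_mul_sum_norm_sq_le (posSemidef_self_mul_conjTranspose M) x
    _ ≤ size ^ (Fintype.card m - 1) * ∑ j, ‖(star x ᵥ* M) j‖ ^ 2 := by
        rw [re_star_dotProduct_mul_conjTranspose_mulVec]
        gcongr

end GramMatrix

section NonDegeneracy

open Finset Matrix

theorem EpsIndependent.mul_norm_le_sum {𝔽 : Type*} [NormedField 𝔽] {q n : ℕ} {ε : ℝ}
    {v : Fin q → Fin n → 𝔽} (hv : EpsIndependent 𝔽 ε v) (a : Fin q → 𝔽) (i : Fin q) :
    ε * n * ‖a i‖ ≤ ∑ j, ‖(a ᵥ* of v) j‖ := by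
  by_contra! hlt
  have ha : a i ≠ 0 := fun h => hlt.not_ge <| by
    rw [h, norm_zero, mul_zero]
    positivity
  obtain ⟨defect, defect_eq⟩ : ∃ d : Fin n → 𝔽, a i • d = a ᵥ* of v :=
    ⟨(a i)⁻¹ • (a ᵥ* of v), smul_inv_smul₀ ha _⟩
  have sum_norm_defect : (∑ j, ‖defect j‖) * ‖a i‖ = ∑ j, ‖(a ᵥ* of v) j‖ := by
    simp_rw [← defect_eq, Pi.smul_apply, norm_smul, ← mul_sum, mul_comm]
  -- Subtracting the defect from `v i` turns the small combination into a linear relation.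
  refine hv ⟨fun k => v k - if k = i then defect else 0, ?_, ?_⟩
  · refine Fintype.not_linearIndependent_iff.2 ⟨a, ?_, i, ha⟩
    calc ∑ k, a k • (v k - if k = i then defect else 0)
        = ∑ k, a k • v k - a i • defect := by simp [smul_sub, sum_sub_distrib]
      _ = 0 := by
          rw [defect_eq, sub_eq_zero]
          exact (vecMul_eq_sum a (of v)).symm
  · calc ∑ k, ∑ j, ‖v k j - (v k - if k = i then defect else 0) j‖
        = ∑ j, ‖defect j‖ := by
          rw [sum_eq_single_of_mem i (mem_univ i) fun k _ hk => by simp [hk]]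
          simp
      _ ≤ ε * n := le_of_mul_le_mul_right (sum_norm_defect.trans_le hlt.le) (norm_pos_iff.2 ha)

theorem EpsIndependent.mul_sum_norm_sq_le {𝔽 : Type*} [NormedField 𝔽] {q n : ℕ} {ε : ℝ}
    (hε : 0 ≤ ε) {v : Fin q → Fin n → 𝔽} (hv : EpsIndependent 𝔽 ε v) (a : Fin q → 𝔽) :
    ε ^ 2 / q * n * ∑ i, ‖a i‖ ^ 2 ≤ ∑ j, ‖(a ᵥ* of v) j‖ ^ 2 := by
  rcases q.eq_zero_or_pos with rfl | hq
  · simp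
  rcases n.eq_zero_or_pos with rfl | hn
  · simp
  have each (i : Fin q) : ε ^ 2 * n * ‖a i‖ ^ 2 ≤ ∑ j, ‖(a ᵥ* of v) j‖ ^ 2 := by
    refine le_of_mul_le_mul_left ?_ (Nat.cast_pos.2 hn : (0 : ℝ) < n)
    calc n * (ε ^ 2 * n * ‖a i‖ ^ 2) = (ε * n * ‖a i‖) ^ 2 := by ring
      _ ≤ (∑ j, ‖(a ᵥ* of v) j‖) ^ 2 := by
          gcongr
          exact hv.mul_norm_le_sum a i
      _ ≤ n * ∑ j, ‖(a ᵥ* of v) j‖ ^ 2 := by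
          simpa using sq_sum_le_card_mul_sum_sq (s := univ) (f := fun j => ‖(a ᵥ* of v) j‖)
  have total : ε ^ 2 * n * ∑ i, ‖a i‖ ^ 2 ≤ q * ∑ j, ‖(a ᵥ* of v) j‖ ^ 2 := by
    simpa [mul_sum] using sum_le_sum fun i (_ : i ∈ univ) => each i
  rw [div_mul_eq_mul_div, div_mul_eq_mul_div, div_le_iff₀' (by positivity)]
  exact total

theorem EpsIndependent.pow_le_re_det {𝕜 : Type*} [RCLike 𝕜] {q n : ℕ} {ε : ℝ} (hε : 0 ≤ ε)
    {v : Fin q → Fin n → 𝕜} (hv : EpsIndependent 𝕜 ε v) :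
    (ε ^ 2 / q * n) ^ q ≤ RCLike.re (of v * (of v)ᴴ).det := by
  simpa using pow_card_le_re_det (isHermitian_mul_conjTranspose_self (of v))
    (by positivity : 0 ≤ ε ^ 2 / q * n) fun x => by
      simpa [re_star_dotProduct_mul_conjTranspose_mulVec] using hv.mul_sum_norm_sq_le hε (star x)

theorem sum_le_card_mul_add_card_filter_mul {ι : Type*} (s : Finset ι) {f : ι → ℝ} {t b : ℝ}
    (ht : 0 ≤ t) (hf : ∀ i ∈ s, f i ≤ b) :
    ∑ i ∈ s, f i ≤ #s * t + #{i ∈ s | t ≤ f i} * b := by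
  calc ∑ i ∈ s, f i ≤ ∑ i ∈ s, (t + if t ≤ f i then b else 0) := by
        refine sum_le_sum fun i hi => ?_
        split_ifs with h
        · linarith [hf i hi]
        · linarith
    _ = #s * t + #{i ∈ s | t ≤ f i} * b := by
        rw [sum_add_distrib, ← sum_filter]
        simp

theorem NonDeg.of_le_sum_sq {r n : ℕ} {M : Matrix (Fin r) (Fin n) ℝ} (hM : ∀ i j, |M i j| ≤ 1)
    {c : ℝ} (hc0 : 0 ≤ c) (hc1 : c ≤ 1)
    (h : ∀ e : Fin r → ℝ, ∑ i, e i ^ 2 = 1 → 2 * c * (r * n) ≤ ∑ j, (∑ i, M i j * e i) ^ 2) :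
    NonDeg c M := by
  intro e he
  have hr : (1 : ℝ) ≤ r := by
    rcases r.eq_zero_or_pos with rfl | hr
    · simp at he
    · exact_mod_cast hr
  have sq_le (j : Fin n) : (∑ i, M i j * e i) ^ 2 ≤ r := by
    calc (∑ i, M i j * e i) ^ 2 ≤ (∑ i, M i j ^ 2) * ∑ i, e i ^ 2 := sum_mul_sq_le_sq_mul_sq _ _ _
      _ ≤ ∑ _i : Fin r, (1 : ℝ) := by
        rw [he, mul_one]
        gcongr with i
        exact (sq_le_one_iff_abs_le_one _).2 (hM i j)
      _ = r := by simp
  have count := sum_le_card_mul_add_card_filter_mul univ (sq_nonneg c) fun j _ => sq_le j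
  have card_eq : Nat.card {j : Fin n | c ≤ |∑ i, M i j * e i|} =
      #{j | c ^ 2 ≤ (∑ i, M i j * e i) ^ 2} := by
    simp [Fintype.card_subtype, sq_le_sq, abs_of_nonneg hc0]
  rw [← card_eq, card_univ, Fintype.card_fin] at count
  have sq_le_mul : n * c ^ 2 ≤ c * (r * n) := by
    calc n * c ^ 2 = c * (c * n) := by ring
      _ ≤ c * (r * n) := by
        gcongr
        linarith
  refine le_of_mul_le_mul_right ?_ (zero_lt_one.trans_le hr)
  linarith [h e he]

theorem NonDeg.of_le_det {r n : ℕ} {M : Matrix (Fin r) (Fin n) ℝ} (hM : ∀ i j, |M i j| ≤ 1)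
    {c : ℝ} (hc0 : 0 ≤ c) (hc1 : c ≤ 1) (hdet : 2 * c * (r * n) ^ r ≤ (M * Mᴴ).det) :
    NonDeg c M := by
  refine .of_le_sum_sq hM hc0 hc1 fun e he => ?_
  have h := mul_sum_norm_sq_le_of_le_re_det hM (κ := 2 * c) (by simpa using hdet) e
  simpa [vecMul, dotProduct, he, mul_comm] using h

theorem EpsIndependent.exists_nonDeg_rotatedRe {r n : ℕ} {ε c : ℝ} (hε : 0 ≤ ε) (hc0 : 0 ≤ c)
    (hc1 : c ≤ 1) (hcε : 2 * c ≤ (ε ^ 2 / (4 * r ^ 2)) ^ r) {v : Fin r → Fin n → ℂ}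
    (hv : EpsIndependent ℂ ε v) (hv1 : ∀ i j, ‖v i j‖ ≤ 1) (θ : ℝ) :
    ∃ k ∈ range (r + 1), NonDeg c (rotatedRe (of v) (θ + k * (Real.pi / (r + 1 : ℕ)))) := by
  obtain ⟨k, hk, hdet⟩ :=
    exists_re_det_mul_conjTranspose_le_rotatedRe (of v) (N := r + 1) (by simp) θ
  rw [Fintype.card_fin] at hdet
  refine ⟨k, hk, NonDeg.of_le_det ?_ hc0 hc1 ?_⟩
  · exact fun i j => (abs_rotatedRe_apply_le _ _ i j).trans (hv1 i j)
  refine le_of_mul_le_mul_left ?_ (by positivity : (0 : ℝ) < 4 ^ r)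
  calc 4 ^ r * (2 * c * (r * n) ^ r)
      ≤ 4 ^ r * ((ε ^ 2 / (4 * r ^ 2)) ^ r * (r * n) ^ r) := by gcongr
    _ = (ε ^ 2 / r * n) ^ r := by
        rw [← mul_pow, ← mul_pow]
        congr 1
        field
    _ ≤ RCLike.re (of v * (of v)ᴴ).det := hv.pow_le_re_det hε
    _ ≤ _ := hdet

end NonDegeneracy

theorem statement12 (r : ℕ) (hr : 1 ≤ r) (ε : ℝ) (hε : 0 < ε) (hε1 : ε ≤ 1) :
    ∃ c : ℝ, 0 < c ∧ ∀ (n : ℕ) (v : Fin r → Fin n → ℂ),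
      EpsIndependent ℂ ε v → (∀ i j, ‖v i j‖ ≤ 1) →
      -- with probability at least `c` over a uniformly random phase `θ ∈ [-π, π]`, the real
      -- matrix with rows `Re(e^{iθ}v₁),…,Re(e^{iθ}v_r)` is `c`-non-degenerate
      c ≤ (MeasureTheory.volume {θ : ℝ | θ ∈ Set.Icc (-Real.pi) Real.pi ∧
            NonDeg c (Matrix.of fun i j =>
              (Complex.exp ((θ : ℂ) * Complex.I) * v i j).re)}).toReal / (2 * Real.pi) := by
  have : (0 : ℝ) < r := by exact_mod_cast hr
  set c : ℝ := min ((ε ^ 2 / (4 * r ^ 2)) ^ r / 2) (1 / (2 * (r + 1)))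
  have c_pos : 0 < c := lt_min (by positivity) (by positivity)
  have two_c_le : 2 * c ≤ (ε ^ 2 / (4 * r ^ 2)) ^ r :=
    (le_div_iff₀' zero_lt_two).1 (min_le_left _ _)
  have c_mul_le : c * (2 * (r + 1)) ≤ 1 := (le_div_iff₀ (by positivity)).1 (min_le_right _ _)
  have c_le_one : c ≤ 1 := by nlinarith
  refine ⟨c, c_pos, fun n v hv hv1 => ?_⟩
  let good : Set ℝ := {θ | NonDeg c (rotatedRe (Matrix.of v) θ)}
  change c ≤ MeasureTheory.volume.real (Set.Icc (-Real.pi) Real.pi ∩ good) / (2 * Real.pi)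
  have vol := le_mul_volume_real_of_forall_exists_add_mem (S := good) Real.pi_pos.le (-Real.pi)
    (hv.exists_nonDeg_rotatedRe hε.le c_pos.le c_le_one two_c_le hv1)
  rw [show -Real.pi + 2 * Real.pi = Real.pi by ring] at vol
  refine (min_le_right _ _).trans ?_
  rw [div_le_div_iff₀ (by positivity) (by positivity)]
  push_cast at vol
  linear_combination 2 * vol
end
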